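/- There is a constant C > 0 such that for every finite subset F ⊂ ℤ and every 0 < λ < 1, the number of x ∈ ℤ with sup_{n ∈ ℕ} ℳ_{2^n}(𝟙_F)(x) > λ is at most C λ⁻¹ log²(e/λ) · #F. -/

import Mathlib

open scoped BigOperators

/-- The set of primes `p ≤ N`. -/
def primesUpTo (N : ℕ) : Finset ℕ := (Finset.range (N + 1)).filter Nat.Prime

/-- `ϑ(N) = Σ_{p ∈ ℙ_N} log p`. -/
noncomputable def theta (N : ℕ) : ℝ := ∑ p ∈ primesUpTo N, Real.log p

/-- The weighted average `ℳ_N f(x) = (1/ϑ(N)) Σ_{p ∈ ℙ_N} f(x + p) log p`. -/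
noncomputable def weightedPrimeAvg (f : ℤ → ℝ) (N : ℕ) (x : ℤ) : ℝ :=
  (theta N)⁻¹ * ∑ p ∈ primesUpTo N, f (x + p) * Real.log p

open scoped BigOperators

namespace PM

/-- local Ramanujan factor -/
noncomputable def cp (p : ℕ) (n : ℤ) : ℝ := if (p : ℤ) ∣ n then (p : ℝ) - 1 else -1

/-- Ramanujan sum attached to a finite set of primes -/
noncomputable def cc (s : Finset ℕ) (n : ℤ) : ℝ := ∏ p ∈ s, cp p n

/-- a finite set of primes -/
def PS (s : Finset ℕ) : Prop := ∀ p ∈ s, p.Prime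

/-- the product -/
def PP (s : Finset ℕ) : ℕ := ∏ p ∈ s, p

lemma PP_pos {s : Finset ℕ} (hs : PS s) : 0 < PP s :=
  Finset.prod_pos fun p hp => (hs p hp).pos

lemma PS.mono {s t : Finset ℕ} (hs : PS s) (h : t ⊆ s) : PS t := fun p hp => hs p (h hp)

lemma PP_inj {s t : Finset ℕ} (hs : PS s) (ht : PS t) (h : PP s = PP t) : s = t := by
  have h1 := Nat.primeFactors_prod hs
  have h2 := Nat.primeFactors_prod ht
  unfold PP at h
  rw [← h1, ← h2, h]

lemma PP_dvd {s t : Finset ℕ} (h : t ⊆ s) : PP t ∣ PP s := Finset.prod_dvd_prod_of_subset _ _ _ h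

lemma cp_periodic (p : ℕ) {M : ℤ} (h : (p : ℤ) ∣ M) (n : ℤ) : cp p (n + M) = cp p n := by
  unfold cp
  have : (p : ℤ) ∣ n + M ↔ (p : ℤ) ∣ n := (Int.dvd_add_left h)
  simp [this]

lemma cc_periodic {s : Finset ℕ} {M : ℤ} (h : ((PP s : ℕ) : ℤ) ∣ M) (n : ℤ) :
    cc s (n + M) = cc s n := by
  unfold cc
  refine Finset.prod_congr rfl fun p hp => cp_periodic p ?_ n
  refine dvd_trans ?_ h
  exact_mod_cast Finset.dvd_prod_of_mem (fun p : ℕ => p) hp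

lemma cp_neg (p : ℕ) (n : ℤ) : cp p (-n) = cp p n := by
  unfold cp; simp

lemma cc_neg (s : Finset ℕ) (n : ℤ) : cc s (-n) = cc s n := by
  unfold cc; simp [cp_neg]

lemma sum_Ico_shift (F : ℤ → ℝ) (a b t : ℤ) :
    ∑ m ∈ Finset.Ico a b, F (m + t) = ∑ m ∈ Finset.Ico (a + t) (b + t), F m := by
  rw [← Finset.map_add_right_Ico, Finset.sum_map]
  rfl

lemma sum_Ico_split (F : ℤ → ℝ) {a b c : ℤ} (h1 : a ≤ b) (h2 : b ≤ c) :
    ∑ m ∈ Finset.Ico a c, F m = ∑ m ∈ Finset.Ico a b, F m + ∑ m ∈ Finset.Ico b c, F m := by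
  rw [← Finset.sum_union]
  · congr 1
    ext m; simp only [Finset.mem_Ico, Finset.mem_union]; omega
  · rw [Finset.disjoint_left]; intro m; simp only [Finset.mem_Ico]; omega

/-- sums of a periodic function over a full period do not depend on the starting point -/
lemma sum_period (F : ℤ → ℝ) {M : ℤ} (hM : 0 ≤ M) (hF : ∀ n, F (n + M) = F n) (a b : ℤ) :
    ∑ m ∈ Finset.Ico a (a + M), F m = ∑ m ∈ Finset.Ico b (b + M), F m := by
  have key : ∀ a b : ℤ, a ≤ b → b ≤ a + M →
      ∑ m ∈ Finset.Ico a (a + M), F m = ∑ m ∈ Finset.Ico b (b + M), F m := by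
    intro a b h1 h2
    rw [sum_Ico_split F h1 h2, sum_Ico_split F h2 (by omega : a + M ≤ b + M), ← sum_Ico_shift]
    simp only [hF]; ring
  rcases hM.eq_or_lt with h0 | h0
  · subst h0; simp
  have step : ∀ a : ℤ, ∑ m ∈ Finset.Ico a (a + M), F m = ∑ m ∈ Finset.Ico 0 (0 + M), F m := by
    intro a
    induction a using Int.induction_on with
    | zero => rfl
    | succ i ih => rw [← ih]; exact (key _ _ (by omega) (by omega)).symm
    | pred i ih => rw [← ih]; exact (key _ _ (by omega) (by omega))
  rw [step a, step b]

lemma sum_period_shift (F : ℤ → ℝ) {M : ℤ} (hM : 0 ≤ M) (hF : ∀ n, F (n + M) = F n) (a t : ℤ) :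
    ∑ m ∈ Finset.Ico a (a + M), F (m + t) = ∑ m ∈ Finset.Ico a (a + M), F m := by
  rw [sum_Ico_shift, show a + M + t = (a + t) + M by ring]
  exact sum_period F hM hF _ _

/-- partial sums of a mean zero periodic function -/
lemma abs_sum_period_le (F : ℤ → ℝ) {M : ℤ} (hM : 0 < M) (hF : ∀ n, F (n + M) = F n)
    (h0 : ∑ m ∈ Finset.Ico 0 (0 + M), F m = 0) {B : ℝ} (hB : ∀ n, |F n| ≤ B) (a b : ℤ) :
    |∑ m ∈ Finset.Ico a b, F m| ≤ M * B := by
  have hB0 : 0 ≤ B := (abs_nonneg _).trans (hB 0)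
  have hM' : (0:ℝ) < M := by exact_mod_cast hM
  have main : ∀ k : ℕ, ∀ a b : ℤ, b - a ≤ k → |∑ m ∈ Finset.Ico a b, F m| ≤ M * B := by
    intro k
    induction k using Nat.strong_induction_on with
    | _ k ih =>
      intro a b hab
      by_cases h : b - a ≤ M
      · calc |∑ m ∈ Finset.Ico a b, F m| ≤ ∑ m ∈ Finset.Ico a b, |F m| :=
              Finset.abs_sum_le_sum_abs _ _
          _ ≤ ∑ m ∈ Finset.Ico a b, B := Finset.sum_le_sum fun m _ => hB m
          _ = ((b - a).toNat : ℝ) * B := by simp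
          _ ≤ M * B := by
            refine mul_le_mul_of_nonneg_right ?_ hB0
            have : ((b - a).toNat : ℤ) ≤ M := by omega
            exact_mod_cast this
      · push Not at h
        rw [sum_Ico_split F (by omega : a ≤ a + M) (by omega : a + M ≤ b),
          sum_period F hM.le hF a 0, h0, zero_add]
        exact ih (k - 1) (by omega) _ _ (by omega)
  exact main (b - a).toNat a b (by omega)

/-- sum over residues mod p -/
lemma sum_res {p : ℕ} (hp : p.Prime) {w : ℤ} (hw : ¬ (p : ℤ) ∣ w) (G : ZMod p → ℝ) (x : ℤ) :
    ∑ j ∈ Finset.range p, G (((x + j * w : ℤ)) : ZMod p) = 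
      haveI := Fact.mk hp; ∑ r : ZMod p, G r := by
  have := Fact.mk hp
  have hw' : ((w : ℤ) : ZMod p) ≠ 0 := by
    rwa [Ne, ZMod.intCast_zmod_eq_zero_iff_dvd]
  refine Finset.sum_bij' (fun j _ => ((x + j * w : ℤ) : ZMod p))
    (fun r _ => ((r - (x : ZMod p)) / (w : ZMod p)).val) ?_ ?_ ?_ ?_ ?_
  · intro a _; simp
  · intro r _; simp [ZMod.val_lt]
  · intro j hj
    have : j < p := by simpa using hj
    push_cast
    rw [add_sub_cancel_left, mul_div_cancel_right₀ _ hw', ZMod.val_natCast_of_lt this]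
  · intro r _
    push_cast
    rw [ZMod.natCast_zmod_val, div_mul_cancel₀ _ hw']; ring
  · intro j _; rfl

lemma cp_eq_zmod (p : ℕ) (n : ℤ) : cp p n = if ((n : ℤ) : ZMod p) = 0 then (p:ℝ) - 1 else -1 := by
  unfold cp; simp [ZMod.intCast_zmod_eq_zero_iff_dvd]

lemma cp_local_zero {p : ℕ} (hp : p.Prime) {w : ℤ} (hw : ¬ (p : ℤ) ∣ w) (x : ℤ) :
    ∑ j ∈ Finset.range p, cp p (x + j * w) = 0 := by
  have := Fact.mk hp
  have := sum_res hp hw (fun r => if r = 0 then (p:ℝ) - 1 else -1) x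
  simp only [cp_eq_zmod]
  rw [this]
  have : ∀ r : ZMod p, (if r = 0 then (p:ℝ) - 1 else -1) = (if r = 0 then (p:ℝ) else 0) - 1 := by
    intro r; split_ifs <;> ring
  simp [this, Finset.sum_sub_distrib]

lemma cp_local_conv {p : ℕ} (hp : p.Prime) {w : ℤ} (hw : ¬ (p : ℤ) ∣ w) (n x : ℤ) :
    ∑ j ∈ Finset.range p, cp p (x + j * w) * cp p (n - (x + j * w)) = p * cp p n := by
  have := Fact.mk hp
  have := sum_res hp hw (fun r => (if r = 0 then (p:ℝ) - 1 else -1) *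
    (if (n : ZMod p) - r = 0 then (p:ℝ) - 1 else -1)) x
  simp only [cp_eq_zmod]
  push_cast at this ⊢
  rw [this]
  have : ∀ r : ZMod p, (if r = 0 then (p:ℝ) - 1 else -1) *
    (if (n : ZMod p) - r = 0 then (p:ℝ) - 1 else -1) =
     (if r = 0 then (if (n : ZMod p) = 0 then (p:ℝ)^2 else 0) else 0) - (if r = 0 then (p:ℝ) else 0)
      - (if r = (n : ZMod p) then (p:ℝ) else 0) + 1 := by
    intro r
    by_cases h1 : r = 0
    · subst h1
      by_cases h2 : (n : ZMod p) = 0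
      · simp [h2]; ring
      · simp [h2, Ne.symm h2]; ring
    · by_cases h2 : r = (n : ZMod p)
      · subst h2; simp [h1]; ring
      · have h3 : ¬ (n : ZMod p) - r = 0 := fun h => h2 (sub_eq_zero.mp h).symm
        simp [h1, h2, h3]
  simp only [this, Finset.sum_add_distrib, Finset.sum_sub_distrib]
  simp
  split_ifs <;> ring

/-- average out one prime -/
lemma avg_out {p : ℕ} (hp : p.Prime) {M w : ℤ} (hM : 0 ≤ M) (A B : ℤ → ℝ) (V : ℝ)
    (hper : ∀ n, A (n + M) * B (n + M) = A n * B n) (hA : ∀ n, A (n + w) = A n)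
    (hB : ∀ x : ℤ, ∑ j ∈ Finset.range p, B (x + j * w) = p * V) :
    ∑ m ∈ Finset.Ico 0 (0 + M), A m * B m = V * ∑ m ∈ Finset.Ico 0 (0 + M), A m := by
  have hA' : ∀ (j : ℕ) n, A (n + j * w) = A n := by
    intro j; induction j with
    | zero => simp
    | succ j ih => intro n; rw [← hA n, ← ih (n + w)]; push_cast; ring_nf
  have h1 : ∀ j : ℕ, ∑ m ∈ Finset.Ico 0 (0 + M), A m * B (m + j * w) =
      ∑ m ∈ Finset.Ico 0 (0 + M), A m * B m := by
    intro j
    rw [← sum_period_shift (fun m => A m * B m) hM hper 0 (j * w)]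
    simp only [hA']
  have hp0 : (p : ℝ) ≠ 0 := by exact_mod_cast hp.ne_zero
  have h2 : (p : ℝ) * ∑ m ∈ Finset.Ico 0 (0 + M), A m * B m =
      p * (V * ∑ m ∈ Finset.Ico 0 (0 + M), A m) := by
    calc (p : ℝ) * ∑ m ∈ Finset.Ico 0 (0 + M), A m * B m
        = ∑ j ∈ Finset.range p, ∑ m ∈ Finset.Ico 0 (0 + M), A m * B (m + j * w) := by
          simp only [h1, Finset.sum_const, Finset.card_range, nsmul_eq_mul]
      _ = ∑ m ∈ Finset.Ico 0 (0 + M), A m * ∑ j ∈ Finset.range p, B (m + j * w) := by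
          rw [Finset.sum_comm]; simp [Finset.mul_sum]
      _ = _ := by
          simp only [hB, Finset.mul_sum]
          refine Finset.sum_congr rfl fun m _ => by ring
  exact mul_left_cancel₀ hp0 h2

lemma not_dvd_PP {p : ℕ} (hp : p.Prime) {s : Finset ℕ} (hs : PS s) (h : p ∉ s) :
    ¬ (p : ℤ) ∣ ((PP s : ℕ) : ℤ) := by
  intro hd
  have hd : p ∣ PP s := by exact_mod_cast hd
  obtain ⟨q, hq, hpq⟩ := (hp.prime.dvd_finsetProd_iff _).mp hd
  rw [(Nat.prime_dvd_prime_iff_eq hp (hs q hq)).mp hpq] at h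
  exact h hq

lemma cc_insert {p : ℕ} {s : Finset ℕ} (h : p ∉ s) (n : ℤ) :
    cc (insert p s) n = cp p n * cc s n := Finset.prod_insert h

/-- idempotence -/
lemma cc_conv_self {s : Finset ℕ} (hs : PS s) {M : ℤ} (hM : 0 ≤ M)
    (hd : ((PP s : ℕ) : ℤ) ∣ M) (n : ℤ) :
    ∑ m ∈ Finset.Ico 0 (0 + M), cc s m * cc s (n - m) = M * cc s n := by
  induction s using Finset.induction_on with
  | empty =>
    have : ((M.toNat : ℤ) : ℝ) = M := by rw [Int.toNat_of_nonneg hM]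
    simp [cc]; exact_mod_cast this
  | insert p s hps ih =>
    have hp : p.Prime := hs p (Finset.mem_insert_self _ _)
    have hs' : PS s := hs.mono (Finset.subset_insert _ _)
    have hd' : ((PP s : ℕ) : ℤ) ∣ M :=
      dvd_trans (by exact_mod_cast PP_dvd (Finset.subset_insert p s)) hd
    have hpM : (p : ℤ) ∣ M :=
      dvd_trans (by exact_mod_cast (Finset.dvd_prod_of_mem (fun p : ℕ => p)
        (Finset.mem_insert_self p s))) hd
    simp only [cc_insert hps]
    have h := avg_out hp (M := M) (w := (PP s : ℕ)) hM (fun m => cc s m * cc s (n - m))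
      (fun m => cp p m * cp p (n - m)) (cp p n) ?_ ?_ ?_
    · rw [ih hs' hd'] at h
      rw [show (M : ℝ) * (cp p n * cc s n) = cp p n * (M * cc s n) by ring, ← h]
      refine Finset.sum_congr rfl fun m _ => by ring
    · intro m
      have e1 : n - (m + M) = (n - m) + (-M) := by ring
      rw [e1, cc_periodic hd', cc_periodic (hd'.neg_right), cp_periodic p hpM,
        cp_periodic p hpM.neg_right]
    · intro m
      have e1 : n - (m + (PP s : ℕ)) = (n - m) + (-(PP s : ℕ)) := by ring
      simp only [e1]
      rw [cc_periodic dvd_rfl, cc_periodic (dvd_neg.mpr dvd_rfl)]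
    · intro x
      exact cp_local_conv hp (not_dvd_PP hp hs' hps) n x

/-- orthogonality -/
lemma cc_orth {s t : Finset ℕ} (hs : PS s) (ht : PS t) {p : ℕ} (hpt : p ∈ t) (hps : p ∉ s) {M : ℤ}
    (hM : 0 ≤ M) (hds : ((PP s : ℕ) : ℤ) ∣ M) (hdt : ((PP t : ℕ) : ℤ) ∣ M) (a b : ℤ) :
    ∑ m ∈ Finset.Ico 0 (0 + M), cc s (m + a) * cc t (m + b) = 0 := by
  have hp : p.Prime := ht p hpt
  set t' := t.erase p with ht'
  have hins : t = insert p t' := (Finset.insert_erase hpt).symm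
  have hpt' : p ∉ t' := Finset.notMem_erase _ _
  have hPt' : PS t' := ht.mono (Finset.erase_subset _ _)
  have hdt' : ((PP t' : ℕ) : ℤ) ∣ M :=
      dvd_trans (by exact_mod_cast PP_dvd (Finset.erase_subset p t)) hdt
  have hpM : (p : ℤ) ∣ M :=
      dvd_trans (by exact_mod_cast Finset.dvd_prod_of_mem (fun p : ℕ => p) hpt) hdt
  have hu : PS (s ∪ t') := by
    intro q hq; rcases Finset.mem_union.mp hq with h | h
    exacts [hs q h, hPt' q h]
  have hpu : p ∉ s ∪ t' := by simp [hps, hpt']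
  have h := avg_out hp (M := M) (w := (PP (s ∪ t') : ℕ)) hM
    (fun m => cc s (m + a) * cc t' (m + b)) (fun m => cp p (m + b)) 0 ?_ ?_ ?_
  · rw [zero_mul] at h
    rw [← h]
    refine Finset.sum_congr rfl fun m _ => ?_
    rw [hins, cc_insert hpt']; ring
  · intro m
    rw [add_right_comm, cc_periodic hds, add_right_comm, cc_periodic hdt', cp_periodic p hpM]
  · intro m
    have d1 : ((PP s : ℕ) : ℤ) ∣ (PP (s ∪ t') : ℕ) := by
      exact_mod_cast PP_dvd Finset.subset_union_left
    have d2 : ((PP t' : ℕ) : ℤ) ∣ (PP (s ∪ t') : ℕ) := by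
      exact_mod_cast PP_dvd Finset.subset_union_right
    rw [add_right_comm m _ a, cc_periodic d1, add_right_comm m _ b, cc_periodic d2]
  · intro x
    rw [mul_zero, ← cp_local_zero hp (not_dvd_PP hp hu hpu) (x + b)]
    refine Finset.sum_congr rfl fun j _ => ?_
    rw [add_right_comm]

lemma cc_orth' {s t : Finset ℕ} (hs : PS s) (ht : PS t) (hst : s ≠ t) {M : ℤ}
    (hM : 0 ≤ M) (hds : ((PP s : ℕ) : ℤ) ∣ M) (hdt : ((PP t : ℕ) : ℤ) ∣ M) (a b : ℤ) :
    ∑ m ∈ Finset.Ico 0 (0 + M), cc s (m + a) * cc t (m + b) = 0 := by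
  by_cases h : t ⊆ s
  · have : ¬ s ⊆ t := fun h' => hst (Finset.Subset.antisymm h' h)
    obtain ⟨p, hp, hp'⟩ := Finset.not_subset.mp this
    rw [← cc_orth ht hs hp hp' hM hdt hds b a]
    refine Finset.sum_congr rfl fun m _ => mul_comm _ _
  · obtain ⟨p, hp, hp'⟩ := Finset.not_subset.mp h
    exact cc_orth hs ht hp hp' hM hds hdt a b

/-- pointwise bounds -/
lemma abs_cc_le_sum (s : Finset ℕ) (n : ℤ) :
    |cc s n| ≤ ∑ t ∈ s.powerset, ∏ p ∈ t, (if (p : ℤ) ∣ n then (p : ℝ) else 0) := by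
  rw [← Finset.prod_one_add, cc, Finset.abs_prod]
  refine Finset.prod_le_prod (fun _ _ => abs_nonneg _) fun p _ => ?_
  unfold cp
  split_ifs with h
  · rw [abs_le]; constructor
    · have : (0:ℝ) ≤ p := Nat.cast_nonneg p
      linarith
    · linarith
  · simp

lemma prod_ite_dvd {t : Finset ℕ} (ht : PS t) (n : ℤ) :
    ∏ p ∈ t, (if (p : ℤ) ∣ n then (p : ℝ) else 0) = if ((PP t : ℕ) : ℤ) ∣ n then (PP t : ℝ) else 0 := by
  by_cases h : ((PP t : ℕ) : ℤ) ∣ n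
  · rw [if_pos h]
    unfold PP; push_cast
    refine Finset.prod_congr rfl fun p hp => if_pos ?_
    exact dvd_trans (by exact_mod_cast Finset.dvd_prod_of_mem (fun p : ℕ => p) hp) h
  · rw [if_neg h]
    by_contra h'
    apply h
    rw [← Ne, Finset.prod_ne_zero_iff] at h'
    have : ∀ p ∈ t, p ∣ n.natAbs := by
      intro p hp
      have := h' p hp
      by_contra hh
      exact this (if_neg (fun h2 => hh (Int.natCast_dvd.mp h2)))
    rw [Int.natCast_dvd]
    refine Finset.prod_primes_dvd _ (fun p hp => (ht p hp).prime) this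

lemma abs_cc_le {s : Finset ℕ} (hs : PS s) (n : ℤ) : |cc s n| ≤ PP s := by
  rw [cc, Finset.abs_prod, PP]; push_cast
  refine Finset.prod_le_prod (fun _ _ => abs_nonneg _) fun p hp => ?_
  have : (2:ℝ) ≤ p := by exact_mod_cast (hs p hp).two_le
  unfold cp
  split_ifs with h
  · rw [abs_of_nonneg] <;> linarith
  · rw [abs_neg, abs_one]; linarith

end PM

open scoped BigOperators

namespace PM

/-- the block of points `x + e, ..., x + k e` -/
def blk (e : ℕ) (k : ℤ → ℕ) (x : ℤ) : Finset ℤ :=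
  (Finset.Icc 1 (k x)).image (fun i : ℕ => x + (e : ℤ) * i)

lemma sum_blk {e : ℕ} (he : 0 < e) (k : ℤ → ℕ) (x : ℤ) (g : ℤ → ℝ) :
    ∑ y ∈ blk e k x, g y = ∑ i ∈ Finset.Icc 1 (k x), g (x + (e : ℤ) * i) := by
  unfold blk
  rw [Finset.sum_image]
  intro i _ j _ h
  have hez : (e : ℤ) ≠ 0 := by exact_mod_cast he.ne'
  have h2 : (e : ℤ) * i = e * j := by simpa using h
  exact_mod_cast mul_left_cancel₀ hez h2

/-- weak type (1,1) along a progression -/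
lemma weak_max {e : ℕ} (he : 0 < e) (k : ℤ → ℕ) (g : ℤ → ℝ) (hg : ∀ y, 0 ≤ g y) (t : ℝ)
    (ht : 0 ≤ t) (X : Finset ℤ)
    (hX : ∀ x ∈ X, t * k x ≤ ∑ i ∈ Finset.Icc 1 (k x), g (x + (e : ℤ) * i))
    (hk : ∀ x ∈ X, 1 ≤ k x) :
    t * X.card ≤ ∑ y ∈ X.biUnion (blk e k), g y := by
  induction X using Finset.strongInduction with
  | _ X ih =>
    rcases X.eq_empty_or_nonempty with h0 | hne
    · subst h0; simp
    set x := X.min' hne with hx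
    have hxX : x ∈ X := Finset.min'_mem _ _
    have hmin : ∀ y ∈ X, x ≤ y := fun y hy => Finset.min'_le _ _ hy
    set Rm := (Finset.range (k x)).image (fun i : ℕ => x + (e : ℤ) * i) with hRm
    set X' := X \ Rm with hX'
    have hsub : X' ⊂ X := by
      refine Finset.ssubset_iff_subset_ne.mpr ⟨Finset.sdiff_subset, fun h => ?_⟩
      have : x ∈ X' := by rw [h]; exact hxX
      rw [hX', Finset.mem_sdiff] at this
      apply this.2
      rw [hRm, Finset.mem_image]
      exact ⟨0, Finset.mem_range.mpr (hk x hxX), by simp⟩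
    have h1 := ih X' hsub (fun y hy => hX y (hsub.1 hy)) (fun y hy => hk y (hsub.1 hy))
    have hcard : (X.card : ℝ) ≤ X'.card + k x := by
      have a1 : X.card ≤ X'.card + Rm.card := by
        have := Finset.card_le_card_sdiff_add_card (s := X) (t := Rm)
        simpa using this
      have a2 : Rm.card ≤ k x := by
        simpa using Finset.card_image_le (s := Finset.range (k x)) (f := fun i : ℕ => x + (e : ℤ) * i)
      exact_mod_cast a1.trans (by omega)
    have hdisj : Disjoint (X'.biUnion (blk e k)) (blk e k x) := by
      rw [Finset.disjoint_left]
      intro y hy hy2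
      rw [Finset.mem_biUnion] at hy
      obtain ⟨x', hx', hy'⟩ := hy
      unfold blk at hy' hy2
      rw [Finset.mem_image] at hy' hy2
      obtain ⟨i', hi', e1⟩ := hy'
      obtain ⟨i, hi, e2⟩ := hy2
      rw [Finset.mem_Icc] at hi hi'
      rw [hX', Finset.mem_sdiff] at hx'
      have hxx := hmin x' hx'.1
      have he' : (0:ℤ) < e := by exact_mod_cast he
      have e3 : x' - x = e * ((i:ℤ) - i') := by linear_combination e1 - e2
      have hii : (0:ℤ) ≤ (i:ℤ) - i' := by
        by_contra hc
        push Not at hc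
        have := mul_neg_of_pos_of_neg he' hc
        omega
      apply hx'.2
      rw [hRm, Finset.mem_image]
      refine ⟨i - i', Finset.mem_range.mpr (by omega), ?_⟩
      push_cast [Nat.cast_sub (by omega : i' ≤ i)]
      linear_combination -e3
    have hU : X'.biUnion (blk e k) ∪ blk e k x ⊆ X.biUnion (blk e k) := by
      refine Finset.union_subset (Finset.biUnion_subset_biUnion_of_subset_left _ hsub.1) ?_
      exact Finset.subset_biUnion_of_mem (blk e k) hxX
    calc t * X.card ≤ t * (X'.card + k x) := mul_le_mul_of_nonneg_left hcard ht
      _ = t * X'.card + t * k x := by ring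
      _ ≤ ∑ y ∈ X'.biUnion (blk e k), g y + ∑ y ∈ blk e k x, g y := by
          rw [sum_blk he]; exact add_le_add h1 (hX x hxX)
      _ = ∑ y ∈ X'.biUnion (blk e k) ∪ blk e k x, g y := (Finset.sum_union hdisj).symm
      _ ≤ _ := Finset.sum_le_sum_of_subset_of_nonneg hU fun y _ _ => hg y

open MeasureTheory in
lemma int_layer {a T : ℝ} (ha : 0 ≤ a) (haT : a ≤ T) :
    ∫ t in Set.Ioc 0 T, (Set.Iio a).indicator (fun t : ℝ => t) t = a ^ 2 / 2 := by
  rw [setIntegral_indicator measurableSet_Iio]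
  have : Set.Ioc 0 T ∩ Set.Iio a = Set.Ioo 0 a := by
    ext t; simp only [Set.mem_inter_iff, Set.mem_Ioc, Set.mem_Iio, Set.mem_Ioo]
    constructor
    · rintro ⟨⟨h1, h2⟩, h3⟩; exact ⟨h1, h3⟩
    · rintro ⟨h1, h2⟩; exact ⟨⟨h1, by linarith⟩, h2⟩
  rw [this, ← integral_Ioc_eq_integral_Ioo, ← intervalIntegral.integral_of_le ha, integral_id]
  ring

open MeasureTheory in
lemma int_pos {g T : ℝ} (hg : 0 ≤ g) (hT : 2 * g ≤ T) :
    ∫ t in Set.Ioc 0 T, max (g - t / 2) 0 = g ^ 2 := by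
  have h0 : ∀ t : ℝ, max (g - t / 2) 0 = (Set.Iio (2 * g)).indicator (fun t : ℝ => g - t / 2) t := by
    intro t
    by_cases h : t < 2 * g
    · rw [Set.indicator_of_mem (by exact h), max_eq_left (by linarith)]
    · rw [Set.indicator_of_notMem (by exact h), max_eq_right (by push Not at h; linarith)]
  simp_rw [h0]
  rw [setIntegral_indicator measurableSet_Iio]
  have : Set.Ioc 0 T ∩ Set.Iio (2 * g) = Set.Ioo 0 (2 * g) := by
    ext t; simp only [Set.mem_inter_iff, Set.mem_Ioc, Set.mem_Iio, Set.mem_Ioo]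
    constructor
    · rintro ⟨⟨h1, h2⟩, h3⟩; exact ⟨h1, h3⟩
    · rintro ⟨h1, h2⟩; exact ⟨⟨h1, by linarith⟩, h2⟩
  rw [this, ← integral_Ioc_eq_integral_Ioo, ← intervalIntegral.integral_of_le (by linarith)]
  rw [intervalIntegral.integral_sub (by simp) (by
    apply Continuous.intervalIntegrable; fun_prop)]
  simp
  ring

open MeasureTheory in
/-- strong type (2,2) along a progression -/
lemma strong_max {e : ℕ} (he : 0 < e) (k : ℤ → ℕ) (g : ℤ → ℝ) (hg : ∀ y, 0 ≤ g y) (X : Finset ℤ)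
    (hk : ∀ x ∈ X, 1 ≤ k x) :
    ∑ x ∈ X, ((k x : ℝ)⁻¹ * ∑ i ∈ Finset.Icc 1 (k x), g (x + (e : ℤ) * i)) ^ 2 ≤
      4 * ∑ y ∈ X.biUnion (blk e k), g y ^ 2 := by
  set a : ℤ → ℝ := fun x => (k x : ℝ)⁻¹ * ∑ i ∈ Finset.Icc 1 (k x), g (x + (e : ℤ) * i) with ha
  set S := X.biUnion (blk e k) with hS
  have ha0 : ∀ x, 0 ≤ a x := fun x => by
    rw [ha]; exact mul_nonneg (by positivity) (Finset.sum_nonneg fun _ _ => hg _)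
  set T : ℝ := ∑ x ∈ X, a x + 2 * ∑ y ∈ S, g y with hT
  have hTa : ∀ x ∈ X, a x ≤ T := fun x hx => by
    have h1 := Finset.single_le_sum (f := a) (fun y _ => ha0 y) hx
    have h2 : 0 ≤ ∑ y ∈ S, g y := Finset.sum_nonneg fun _ _ => hg _
    linarith
  have hTg : ∀ y ∈ S, 2 * g y ≤ T := fun x hx => by
    have h1 := Finset.single_le_sum (f := g) (fun y _ => hg y) hx
    have h2 : 0 ≤ ∑ y ∈ X, a y := Finset.sum_nonneg fun _ _ => ha0 _
    linarith
  have key : ∀ t ∈ Set.Ioc 0 T, ∑ x ∈ X, (Set.Iio (a x)).indicator (fun t : ℝ => t) t ≤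
      ∑ y ∈ S, 2 * max (g y - t / 2) 0 := by
    intro t ht
    have ht0 : 0 < t := ht.1
    have h1 := weak_max he k (fun y => max (g y - t / 2) 0) (fun y => le_max_right _ _) (t / 2)
      (by linarith) (X.filter fun x => t < a x) ?_ ?_
    · have e1 : ∑ x ∈ X, (Set.Iio (a x)).indicator (fun t : ℝ => t) t =
          t * (X.filter fun x => t < a x).card := by
        rw [Finset.card_filter]; push_cast
        rw [Finset.mul_sum]
        refine Finset.sum_congr rfl fun x _ => ?_
        by_cases h : t < a x
        · rw [Set.indicator_of_mem (by exact h)]; simp [h]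
        · rw [Set.indicator_of_notMem (by exact h)]; simp [h]
      rw [e1, ← Finset.mul_sum]
      have h2 : ∑ y ∈ (X.filter fun x => t < a x).biUnion (blk e k), max (g y - t / 2) 0 ≤
          ∑ y ∈ S, max (g y - t / 2) 0 :=
        Finset.sum_le_sum_of_subset_of_nonneg
          (Finset.biUnion_subset_biUnion_of_subset_left _ (Finset.filter_subset _ _))
          fun y _ _ => le_max_right _ _
      linarith
    · intro x hx
      rw [Finset.mem_filter] at hx
      have hkx : (0:ℝ) < k x := by exact_mod_cast hk x hx.1
      have h3 : t * k x ≤ ∑ i ∈ Finset.Icc 1 (k x), g (x + (e : ℤ) * i) := by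
        have := hx.2
        rw [ha] at this
        simp only [] at this
        rw [inv_mul_eq_div, lt_div_iff₀ hkx] at this
        exact this.le
      have h4 : ∑ i ∈ Finset.Icc 1 (k x), (g (x + (e : ℤ) * i) - t / 2) ≤
          ∑ i ∈ Finset.Icc 1 (k x), max (g (x + (e : ℤ) * i) - t / 2) 0 :=
        Finset.sum_le_sum fun _ _ => le_max_left _ _
      rw [Finset.sum_sub_distrib] at h4
      simp only [Finset.sum_const, Nat.card_Icc, nsmul_eq_mul, Nat.add_sub_cancel] at h4
      linarith
    · intro x hx
      exact hk x (Finset.mem_filter.mp hx).1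
  have hi1 : ∀ x ∈ X, IntegrableOn (fun t => (Set.Iio (a x)).indicator (fun t : ℝ => t) t)
      (Set.Ioc 0 T) := by
    intro x _
    apply Integrable.indicator _ measurableSet_Iio
    exact (continuous_id.integrableOn_Icc).mono_set Set.Ioc_subset_Icc_self
  have hi2 : ∀ y ∈ S, IntegrableOn (fun t => 2 * max (g y - t / 2) 0) (Set.Ioc 0 T) := by
    intro y _
    refine (Continuous.integrableOn_Icc ?_).mono_set Set.Ioc_subset_Icc_self
    fun_prop
  have h := setIntegral_mono_on (integrable_finsetSum X hi1) (integrable_finsetSum S hi2)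
    measurableSet_Ioc (by simpa using key)
  rw [integral_finsetSum _ hi1, integral_finsetSum _ hi2] at h
  have e1 : ∑ x ∈ X, ∫ t in Set.Ioc 0 T, (Set.Iio (a x)).indicator (fun t : ℝ => t) t =
      ∑ x ∈ X, a x ^ 2 / 2 := Finset.sum_congr rfl fun x hx => int_layer (ha0 x) (hTa x hx)
  have e2 : ∑ y ∈ S, ∫ t in Set.Ioc 0 T, 2 * max (g y - t / 2) 0 = ∑ y ∈ S, 2 * g y ^ 2 :=
    Finset.sum_congr rfl fun y hy => by
      rw [integral_const_mul, int_pos (hg y) (hTg y hy)]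
  rw [e1, e2, ← Finset.sum_div, ← Finset.mul_sum] at h
  linarith

end PM

open scoped BigOperators

namespace PM

/-- finite support -/
def FS (f : ℤ → ℝ) : Prop := f.support.Finite

/-- energy -/
noncomputable def En (f : ℤ → ℝ) : ℝ := ∑' x, f x ^ 2

lemma FS.summable {f : ℤ → ℝ} (hf : FS f) : Summable f := summable_of_hasFiniteSupport hf

lemma FS.mul_right' {f : ℤ → ℝ} (hf : FS f) (g : ℤ → ℝ) : FS (fun x => f x * g x) :=
  Set.Finite.subset hf fun x hx => by
    simp only [Function.mem_support] at hx ⊢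
    exact left_ne_zero_of_mul hx

lemma FS.mul_left' {f : ℤ → ℝ} (hf : FS f) (g : ℤ → ℝ) : FS (fun x => g x * f x) :=
  Set.Finite.subset hf fun x hx => by
    simp only [Function.mem_support] at hx ⊢
    exact right_ne_zero_of_mul hx

lemma FS.sq {f : ℤ → ℝ} (hf : FS f) : FS (fun x => f x ^ 2) := by
  simpa [pow_two] using hf.mul_right' f

lemma FS.shift {f : ℤ → ℝ} (hf : FS f) (m : ℤ) : FS (fun x => f (x + m)) := by
  have : (fun x => f (x + m)).support = (fun x => x + m) ⁻¹' f.support := rfl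
  unfold FS
  rw [this]
  exact Set.Finite.preimage (add_left_injective m).injOn hf

lemma FS.sum {ι : Type*} (S : Finset ι) {f : ι → ℤ → ℝ} (hf : ∀ i ∈ S, FS (f i)) :
    FS (fun x => ∑ i ∈ S, f i x) := by
  classical
  refine Set.Finite.subset (S.finite_toSet.biUnion hf) fun x hx => ?_
  simp only [Function.mem_support] at hx
  obtain ⟨i, hi, h⟩ := Finset.exists_ne_zero_of_sum_ne_zero hx
  exact Set.mem_biUnion hi h

lemma tsum_shift (f : ℤ → ℝ) (m : ℤ) : ∑' x, f (x + m) = ∑' x, f x :=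
  (Equiv.addRight m).tsum_eq f

lemma En_nonneg (f : ℤ → ℝ) : 0 ≤ En f := tsum_nonneg fun _ => sq_nonneg _

lemma En_shift (f : ℤ → ℝ) (m : ℤ) : En (fun x => f (x + m)) = En f :=
  tsum_shift (fun x => f x ^ 2) m

lemma sum_le_En {f : ℤ → ℝ} (hf : FS f) (S : Finset ℤ) : ∑ x ∈ S, f x ^ 2 ≤ En f :=
  hf.sq.summable.sum_le_tsum S fun _ _ => sq_nonneg _

lemma abs_corr_le {f g : ℤ → ℝ} (hf : FS f) (hg : FS g) :
    |∑' x, f x * g x| ≤ (En f + En g) / 2 := by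
  have h1 : Summable (fun x => f x * g x) := (hf.mul_right' g).summable
  have h2 : Summable (fun x => (f x ^ 2 + g x ^ 2) / 2) :=
    (hf.sq.summable.add hg.sq.summable).div_const 2
  have e : ∑' x, (f x ^ 2 + g x ^ 2) / 2 = (En f + En g) / 2 := by
    rw [tsum_div_const, hf.sq.summable.tsum_add hg.sq.summable]; rfl
  rw [abs_le, ← e]
  constructor
  · rw [← tsum_neg]
    exact h2.neg.tsum_le_tsum (fun x => by nlinarith [sq_nonneg (f x + g x)]) h1
  · exact h1.tsum_le_tsum (fun x => by nlinarith [sq_nonneg (f x - g x)]) h2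

/-- local average against the Ramanujan sum -/
noncomputable def gs (s : Finset ℕ) (H : ℤ) (f : ℤ → ℝ) (x : ℤ) : ℝ :=
  (H : ℝ)⁻¹ * ∑ m ∈ Finset.Ico 0 H, cc s m * f (x + m)

/-- adjoint -/
noncomputable def us (s : Finset ℕ) (H : ℤ) (g : ℤ → ℝ) (x : ℤ) : ℝ :=
  (H : ℝ)⁻¹ * ∑ m ∈ Finset.Ico 0 H, cc s m * g (x + -m)

lemma FS.gs {f : ℤ → ℝ} (hf : FS f) (s : Finset ℕ) (H : ℤ) : FS (gs s H f) :=
  FS.mul_left' (f := fun x => ∑ m ∈ Finset.Ico 0 H, cc s m * f (x + m))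
    (FS.sum _ fun m _ => (hf.shift m).mul_left' _) _

lemma FS.us {f : ℤ → ℝ} (hf : FS f) (s : Finset ℕ) (H : ℤ) : FS (us s H f) :=
  FS.mul_left' (f := fun x => ∑ m ∈ Finset.Ico 0 H, cc s m * f (x + -m))
    (FS.sum _ fun m _ => (hf.shift (-m)).mul_left' _) _

lemma tsum_finset_sum {ι : Type*} (S : Finset ι) {f : ι → ℤ → ℝ} (hf : ∀ i ∈ S, FS (f i)) :
    ∑' x, ∑ i ∈ S, f i x = ∑ i ∈ S, ∑' x, f i x :=
  Summable.tsum_finsetSum fun i hi => (hf i hi).summable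

lemma gs_us_adj {f g : ℤ → ℝ} (hf : FS f) (hg : FS g) (s : Finset ℕ) (H : ℤ) :
    ∑' x, gs s H f x * g x = ∑' x, f x * us s H g x := by
  have h1 : ∀ x, gs s H f x * g x = ∑ m ∈ Finset.Ico 0 H, (H : ℝ)⁻¹ * cc s m * (f (x + m) * g x) := by
    intro x; unfold gs; rw [Finset.mul_sum, Finset.sum_mul]
    exact Finset.sum_congr rfl fun m _ => by ring
  have h2 : ∀ x, f x * us s H g x =
      ∑ m ∈ Finset.Ico 0 H, (H : ℝ)⁻¹ * cc s m * (f x * g (x + -m)) := by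
    intro x; unfold us; rw [Finset.mul_sum, Finset.mul_sum]
    exact Finset.sum_congr rfl fun m _ => by ring
  simp_rw [h1, h2]
  rw [tsum_finset_sum _ fun m _ => (hg.mul_left' _).mul_left' _,
    tsum_finset_sum _ fun m _ => (hf.mul_right' _).mul_left' _]
  refine Finset.sum_congr rfl fun m _ => ?_
  rw [← tsum_shift (fun x => (H : ℝ)⁻¹ * cc s m * (f x * g (x + -m))) m]
  simp

/-- correlation of the adjoints -/
lemma us_corr {g h : ℤ → ℝ} (hg : FS g) (s t : Finset ℕ) (H K : ℤ) :
    ∑' x, us s H g x * us t K h x = (H : ℝ)⁻¹ * (K : ℝ)⁻¹ *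
      ∑ m ∈ Finset.Ico 0 H, ∑ m' ∈ Finset.Ico 0 K, cc s m * cc t m' *
        (∑' x, g x * h (x + (m - m'))) := by
  have h1 : ∀ x, us s H g x * us t K h x = ∑ m ∈ Finset.Ico 0 H, ∑ m' ∈ Finset.Ico 0 K,
      ((H : ℝ)⁻¹ * (K : ℝ)⁻¹ * (cc s m * cc t m')) * (g (x + -m) * h (x + -m')) := by
    intro x; unfold us
    rw [mul_mul_mul_comm, Finset.sum_mul_sum, Finset.mul_sum]
    refine Finset.sum_congr rfl fun m _ => ?_
    rw [Finset.mul_sum]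
    exact Finset.sum_congr rfl fun m' _ => by ring
  have hfs : ∀ m m', FS (fun x => ((H : ℝ)⁻¹ * (K : ℝ)⁻¹ * (cc s m * cc t m')) *
      (g (x + -m) * h (x + -m'))) := fun m m' => ((hg.shift (-m)).mul_right' _).mul_left' _
  simp_rw [h1]
  rw [tsum_finset_sum _ fun m _ => FS.sum _ fun m' _ => hfs m m', Finset.mul_sum]
  refine Finset.sum_congr rfl fun m _ => ?_
  rw [tsum_finset_sum _ fun m' _ => hfs m m', Finset.mul_sum]
  refine Finset.sum_congr rfl fun m' _ => ?_
  rw [tsum_mul_left, ← tsum_shift _ m]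
  simp only [add_neg_cancel_right, show ∀ x : ℤ, x + m + -m' = x + (m - m') from fun x => by ring]
  ring

/-- count of multiples -/
lemma sum_ite_dvd {d : ℕ} (hd : 0 < d) (h : ℕ) :
    ∑ m ∈ Finset.Ico (0:ℤ) ((d * h : ℕ) : ℤ), (if (d : ℤ) ∣ m then (d : ℝ) else 0) = (d * h : ℕ) := by
  have hd' : (0:ℤ) < d := by exact_mod_cast hd
  induction h with
  | zero => simp
  | succ h ih =>
    rw [sum_Ico_split _ (b := ((d * h : ℕ) : ℤ)) (by positivity) (by push_cast; nlinarith), ih]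
    have : ∑ m ∈ Finset.Ico ((d * h : ℕ) : ℤ) ((d * (h + 1) : ℕ) : ℤ),
        (if (d : ℤ) ∣ m then (d : ℝ) else 0) = d := by
      rw [Finset.sum_eq_single ((d * h : ℕ) : ℤ)]
      · simp
      · intro b hb hne
        rw [if_neg]
        rintro ⟨c, rfl⟩
        rw [Finset.mem_Ico] at hb
        push_cast at hb
        have a1 : (h : ℤ) ≤ c := le_of_mul_le_mul_left hb.1 hd'
        have a2 : c < h + 1 := lt_of_mul_lt_mul_left hb.2 hd'.le
        apply hne
        rw [show c = h by omega]; push_cast; rfl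
      · intro hn
        exfalso; apply hn
        rw [Finset.mem_Ico]; push_cast; constructor
        · exact le_rfl
        · nlinarith
    rw [this]; push_cast; ring

lemma sum_abs_cc_le {s : Finset ℕ} (hs : PS s) (h : ℕ) :
    ∑ m ∈ Finset.Ico (0:ℤ) ((PP s * h : ℕ) : ℤ), |cc s m| ≤ (PP s * h : ℕ) * 2 ^ s.card := by
  calc ∑ m ∈ Finset.Ico (0:ℤ) ((PP s * h : ℕ) : ℤ), |cc s m|
      ≤ ∑ m ∈ Finset.Ico (0:ℤ) ((PP s * h : ℕ) : ℤ), ∑ t ∈ s.powerset,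
          (if ((PP t : ℕ) : ℤ) ∣ m then (PP t : ℝ) else 0) := by
        refine Finset.sum_le_sum fun m _ => (abs_cc_le_sum s m).trans_eq ?_
        exact Finset.sum_congr rfl fun t ht => prod_ite_dvd (hs.mono (Finset.mem_powerset.mp ht)) m
    _ = ∑ t ∈ s.powerset, ((PP s * h : ℕ) : ℝ) := by
        rw [Finset.sum_comm]
        refine Finset.sum_congr rfl fun t ht => ?_
        have hts := Finset.mem_powerset.mp ht
        obtain ⟨c, hc⟩ := PP_dvd hts
        rw [hc, mul_assoc]
        exact sum_ite_dvd (PP_pos (hs.mono hts)) (c * h)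
    _ = _ := by
        rw [Finset.sum_const, Finset.card_powerset, nsmul_eq_mul]; push_cast; ring

lemma diag_bound {g : ℤ → ℝ} (hg : FS g) {s : Finset ℕ} (hs : PS s) {h : ℕ} (hh : 0 < h) :
    ∑' x, us s ((PP s * h : ℕ) : ℤ) g x * us s ((PP s * h : ℕ) : ℤ) g x ≤ 4 ^ s.card * En g := by
  rw [us_corr hg]
  have hH : (0:ℝ) < ((PP s * h : ℕ) : ℝ) := by exact_mod_cast Nat.mul_pos (PP_pos hs) hh
  set Hn := PP s * h with hHn
  have h1 : ∑ m ∈ Finset.Ico (0:ℤ) (Hn : ℤ), ∑ m' ∈ Finset.Ico (0:ℤ) (Hn : ℤ), cc s m * cc s m' *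
        (∑' x, g x * g (x + (m - m'))) ≤
      ∑ m ∈ Finset.Ico (0:ℤ) (Hn : ℤ), ∑ m' ∈ Finset.Ico (0:ℤ) (Hn : ℤ), |cc s m| * |cc s m'| * En g := by
    refine Finset.sum_le_sum fun m _ => Finset.sum_le_sum fun m' _ => ?_
    refine (le_abs_self _).trans ?_
    rw [abs_mul, abs_mul]
    refine mul_le_mul_of_nonneg_left ?_ (by positivity)
    have := abs_corr_le hg (hg.shift (m - m'))
    rw [En_shift] at this
    linarith
  have h2 : ∑ m ∈ Finset.Ico (0:ℤ) (Hn : ℤ), ∑ m' ∈ Finset.Ico (0:ℤ) (Hn : ℤ),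
      |cc s m| * |cc s m'| * En g = (∑ m ∈ Finset.Ico (0:ℤ) (Hn : ℤ), |cc s m|) ^ 2 * En g := by
    rw [pow_two, Finset.sum_mul_sum, Finset.sum_mul]
    refine Finset.sum_congr rfl fun m _ => ?_
    rw [Finset.sum_mul]
  have h3 := sum_abs_cc_le hs h
  have h4 : (∑ m ∈ Finset.Ico (0:ℤ) (Hn : ℤ), |cc s m|) ^ 2 ≤ ((Hn : ℝ) * 2 ^ s.card) ^ 2 :=
    pow_le_pow_left₀ (Finset.sum_nonneg fun _ _ => abs_nonneg _) h3 2
  calc _ ≤ (((Hn : ℤ) : ℝ)⁻¹ * ((Hn : ℤ) : ℝ)⁻¹) * (((Hn : ℝ) * 2 ^ s.card) ^ 2 * En g) := by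
        refine mul_le_mul_of_nonneg_left ?_ (by positivity)
        exact h1.trans (h2.trans_le (mul_le_mul_of_nonneg_right h4 (En_nonneg g)))
    _ = 4 ^ s.card * En g := by
        rw [show (4:ℝ) = 2 ^ 2 by norm_num, ← pow_mul]
        push_cast
        field_simp
        ring

lemma offdiag_sum {s t : Finset ℕ} (hs : PS s) (ht : PS t) (hst : s ≠ t) (H K : ℕ) (ρ : ℤ → ℝ)
    {A : ℝ} (hρ : ∀ r, |ρ r| ≤ A) :
    |∑ m ∈ Finset.Ico (0:ℤ) H, ∑ m' ∈ Finset.Ico (0:ℤ) K, cc s m * cc t m' * ρ (m - m')| ≤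
      (H + K) * A * ((PP s : ℝ) * PP t) ^ 2 := by
  have hA : 0 ≤ A := (abs_nonneg _).trans (hρ 0)
  have e1 : ∑ m ∈ Finset.Ico (0:ℤ) H, ∑ m' ∈ Finset.Ico (0:ℤ) K, cc s m * cc t m' * ρ (m - m') =
      ∑ r ∈ Finset.Ico (-(K:ℤ)) H, ρ r * ∑ m' ∈ Finset.Ico (max 0 (-r)) (min (K:ℤ) (H - r)),
        cc s (m' + r) * cc t (m' + 0) := by
    rw [Finset.sum_comm]
    have : ∀ m' ∈ Finset.Ico (0:ℤ) K, ∑ m ∈ Finset.Ico (0:ℤ) H, cc s m * cc t m' * ρ (m - m') =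
        ∑ r ∈ Finset.Ico (0 - m') (H - m'), ρ r * (cc s (m' + r) * cc t (m' + 0)) := by
      intro m' _
      have := sum_Ico_shift (fun m => cc s m * cc t m' * ρ (m - m')) (0 - m') (H - m') m'
      simp only [sub_add_cancel] at this
      rw [← this]
      refine Finset.sum_congr rfl fun r _ => ?_
      rw [add_sub_cancel_right, add_zero, add_comm r m']; ring
    rw [Finset.sum_congr rfl this]
    simp_rw [Finset.mul_sum]
    rw [Finset.sum_comm']
    intro x y
    simp only [Finset.mem_Ico]
    omega
  rw [e1]
  have hpos : (0:ℤ) < (PP s : ℤ) * PP t := by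
    have := PP_pos hs; have := PP_pos ht; positivity
  have h2 : ∀ r a b : ℤ, |∑ m' ∈ Finset.Ico a b, cc s (m' + r) * cc t (m' + 0)| ≤
      ((PP s : ℝ) * PP t) ^ 2 := by
    intro r a b
    have := abs_sum_period_le (fun m' => cc s (m' + r) * cc t (m' + 0)) hpos ?_
      (cc_orth' hs ht hst hpos.le (dvd_mul_right _ _) (dvd_mul_left _ _) r 0)
      (B := (PP s : ℝ) * PP t) ?_ a b
    · refine this.trans_eq ?_
      push_cast; ring
    · intro n
      have d1 : (PP s : ℤ) ∣ (PP s : ℤ) * PP t := dvd_mul_right _ _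
      have d2 : (PP t : ℤ) ∣ (PP s : ℤ) * PP t := dvd_mul_left _ _
      rw [add_right_comm n _ r, cc_periodic d1, add_right_comm n _ 0, cc_periodic d2]
    · intro n
      rw [abs_mul]
      exact mul_le_mul (abs_cc_le hs _) (abs_cc_le ht _) (abs_nonneg _) (by positivity)
  calc _ ≤ ∑ r ∈ Finset.Ico (-(K:ℤ)) H, A * ((PP s : ℝ) * PP t) ^ 2 := by
        refine (Finset.abs_sum_le_sum_abs _ _).trans (Finset.sum_le_sum fun r _ => ?_)
        rw [abs_mul]
        exact mul_le_mul (hρ r) (h2 r _ _) (abs_nonneg _) hA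
    _ = _ := by
        simp only [Finset.sum_const, Int.card_Ico, nsmul_eq_mul]
        rw [show ((H : ℤ) - -(K:ℤ)).toNat = H + K by omega]
        push_cast; ring

lemma offdiag_bound {g k : ℤ → ℝ} (hg : FS g) (hk : FS k) {s t : Finset ℕ} (hs : PS s) (ht : PS t)
    (hst : s ≠ t) {h D : ℕ} (hh : 0 < h) (hD : 0 < D) (hs1 : D ≤ PP s) (hs2 : PP s ≤ 2 * D)
    (ht1 : D ≤ PP t) (ht2 : PP t ≤ 2 * D) :
    ∑' x, us s ((PP s * h : ℕ) : ℤ) g x * us t ((PP t * h : ℕ) : ℤ) k x ≤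
      16 * D ^ 3 / h * (En g + En k) := by
  rw [us_corr hg]
  have h1 := offdiag_sum hs ht hst (PP s * h) (PP t * h) (fun r => ∑' x, g x * k (x + r))
    (A := (En g + En k) / 2) (fun r => by
      have := abs_corr_le hg (hk.shift r)
      rwa [En_shift] at this)
  have hE : 0 ≤ En g + En k := add_nonneg (En_nonneg _) (En_nonneg _)
  have hh' : (0:ℝ) < h := by exact_mod_cast hh
  have hD' : (0:ℝ) < D := by exact_mod_cast hD
  have a1 : (D : ℝ) ≤ PP s := by exact_mod_cast hs1
  have a2 : (PP s : ℝ) ≤ 2 * D := by exact_mod_cast hs2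
  have b1 : (D : ℝ) ≤ PP t := by exact_mod_cast ht1
  have b2 : (PP t : ℝ) ≤ 2 * D := by exact_mod_cast ht2
  have hps : (0:ℝ) < PP s := by linarith
  have hpt : (0:ℝ) < PP t := by linarith
  refine (mul_le_mul_of_nonneg_left ((le_abs_self _).trans h1) (by positivity)).trans ?_
  push_cast
  have e : ((PP s : ℝ) * h)⁻¹ * ((PP t : ℝ) * h)⁻¹ * ((PP s * h + PP t * h) * ((En g + En k) / 2) *
      ((PP s : ℝ) * PP t) ^ 2) =
      ((PP s : ℝ) + PP t) * (PP s * PP t) / h * ((En g + En k) / 2) := by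
    field_simp
  rw [e]
  have h3 : ((PP s : ℝ) + PP t) * (PP s * PP t) ≤ 32 * D ^ 3 := by
    calc _ ≤ (2 * (D:ℝ) + 2 * D) * (2 * D * (2 * D)) := by gcongr 
      _ ≤ 32 * D ^ 3 := by ring_nf; nlinarith [pow_pos hD' 3]
  calc _ ≤ 32 * D ^ 3 / h * ((En g + En k) / 2) := by gcongr
    _ = _ := by ring

/-- the dual large sieve -/
lemma large_sieve {f : ℤ → ℝ} (hf : FS f) (B : Finset (Finset ℕ)) (hB : ∀ s ∈ B, PS s)
    {D : ℕ} (hD : 0 < D) (hB1 : ∀ s ∈ B, D ≤ PP s) (hB2 : ∀ s ∈ B, PP s < 2 * D)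
    {Q : ℝ} (hQ : ∀ s ∈ B, 4 ^ s.card ≤ Q) (hQ0 : 0 ≤ Q) :
    ∑ s ∈ B, En (gs s ((PP s * (32 * D ^ 4) : ℕ) : ℤ) f) ≤ (Q + 1) * En f := by
  classical
  set h := 32 * D ^ 4 with hh
  have hh0 : 0 < h := by positivity
  set g : Finset ℕ → ℤ → ℝ := fun s => gs s ((PP s * h : ℕ) : ℤ) f with hg
  have hgF : ∀ s, FS (g s) := fun s => hf.gs _ _
  set u : Finset ℕ → ℤ → ℝ := fun s => us s ((PP s * h : ℕ) : ℤ) (g s) with hu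
  have huF : ∀ s, FS (u s) := fun s => (hgF s).us _ _
  set G := ∑ s ∈ B, En (g s) with hG
  have hcard : B.card ≤ D := by
    have : B.card ≤ (Finset.Ico D (2 * D)).card := by
      refine Finset.card_le_card_of_injOn PP (fun s hs => ?_) fun s hs t ht hst => ?_
      · simp only [Finset.coe_Ico, Set.mem_Ico]
        exact ⟨hB1 s hs, hB2 s hs⟩
      · exact PP_inj (hB s hs) (hB t ht) hst
    simp only [Nat.card_Ico] at this
    omega
  have hG0 : 0 ≤ G := Finset.sum_nonneg fun _ _ => En_nonneg _
  -- G = <f, sum u>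
  have e1 : G = ∑' x, f x * ∑ s ∈ B, u s x := by
    have : ∀ s, En (g s) = ∑' x, f x * u s x := by
      intro s
      rw [← gs_us_adj hf (hgF s)]
      refine tsum_congr fun x => ?_
      rw [pow_two]
    rw [hG]
    simp_rw [this, Finset.mul_sum]
    rw [tsum_finset_sum _ fun s _ => hf.mul_right' _]
  have hUF : FS (fun x => ∑ s ∈ B, u s x) := FS.sum _ fun s _ => huF s
  have e2 : En (fun x => ∑ s ∈ B, u s x) = ∑ s ∈ B, ∑ t ∈ B, ∑' x, u s x * u t x := by
    unfold En
    have : ∀ x, (∑ s ∈ B, u s x) ^ 2 = ∑ s ∈ B, ∑ t ∈ B, u s x * u t x := by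
      intro x; rw [pow_two, Finset.sum_mul_sum]
    simp_rw [this]
    rw [tsum_finset_sum _ fun s _ => FS.sum _ fun t _ => (huF s).mul_right' _]
    refine Finset.sum_congr rfl fun s _ => ?_
    rw [tsum_finset_sum _ fun t _ => (huF s).mul_right' _]
  have hDR : (0:ℝ) < D := by exact_mod_cast hD
  have h3 : En (fun x => ∑ s ∈ B, u s x) ≤ (Q + 1) * G := by
    rw [e2]
    have hst : ∀ s ∈ B, ∀ t ∈ B, ∑' x, u s x * u t x ≤
        (if s = t then Q * En (g s) else 0) + 16 * D ^ 3 / h * (En (g s) + En (g t)) := by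
      intro s hs t ht
      have hpos : 0 ≤ 16 * (D:ℝ) ^ 3 / h * (En (g s) + En (g t)) :=
        mul_nonneg (by positivity) (add_nonneg (En_nonneg _) (En_nonneg _))
      by_cases hst : s = t
      · subst hst
        rw [if_pos rfl]
        have := diag_bound (hgF s) (hB s hs) hh0
        have h4 := mul_le_mul_of_nonneg_right (hQ s hs) (En_nonneg (g s))
        linarith
      · rw [if_neg hst, zero_add]
        exact offdiag_bound (hgF s) (hgF t) (hB s hs) (hB t ht) hst hh0 hD (hB1 s hs)
          (hB2 s hs).le (hB1 t ht) (hB2 t ht).le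
    refine (Finset.sum_le_sum fun s hs => Finset.sum_le_sum fun t ht => hst s hs t ht).trans ?_
    have e3 : ∑ s ∈ B, ∑ t ∈ B, ((if s = t then Q * En (g s) else 0) +
        16 * (D:ℝ) ^ 3 / h * (En (g s) + En (g t))) =
        Q * G + 16 * (D:ℝ) ^ 3 / h * (2 * B.card * G) := by
      simp_rw [Finset.sum_add_distrib, ← Finset.mul_sum, Finset.sum_add_distrib]
      simp only [Finset.sum_const, nsmul_eq_mul, ← Finset.mul_sum]
      rw [← hG]
      have : ∑ s ∈ B, ∑ t ∈ B, (if s = t then Q * En (g s) else 0) = Q * G := by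
        rw [hG, Finset.mul_sum]
        refine Finset.sum_congr rfl fun s hs => ?_
        rw [Finset.sum_ite_eq, if_pos hs]
      rw [this]; ring
    rw [e3]
    have h5 : (B.card : ℝ) ≤ D := by exact_mod_cast hcard
    have h6 : 16 * (D:ℝ) ^ 3 / h * (2 * B.card * G) ≤ G := by
      calc _ ≤ 16 * (D:ℝ) ^ 3 / h * (2 * D * G) := by gcongr
        _ = G := by rw [hh]; push_cast; field_simp; norm_num
    linarith
  -- AM-GM
  have hQ1 : 0 < Q + 1 := by linarith
  have hc := abs_corr_le (f := fun x => (Q + 1) * f x) (hf.mul_left' (fun _ => Q + 1)) hUF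
  have e4 : ∑' x, (Q + 1) * f x * ∑ s ∈ B, u s x = (Q + 1) * G := by
    rw [e1, ← tsum_mul_left]
    exact tsum_congr fun x => by ring
  have e5 : En (fun x => (Q + 1) * f x) = (Q + 1) ^ 2 * En f := by
    unfold En; rw [← tsum_mul_left]; exact tsum_congr fun x => by ring
  rw [e4, e5] at hc
  have h7 := (le_abs_self _).trans hc
  have h8 : (Q + 1) * G ≤ (Q + 1) * ((Q + 1) * En f) := by nlinarith
  exact le_of_mul_le_mul_left h8 hQ1

end PM

open scoped BigOperators

namespace PM

lemma sum_nat_int (F : ℤ → ℝ) (N : ℕ) :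
    ∑ n ∈ Finset.Icc 1 N, F (n : ℤ) = ∑ m ∈ Finset.Ico (1:ℤ) (N + 1), F m := by
  refine Finset.sum_bij (fun (n : ℕ) _ => (n : ℤ)) ?_ ?_ ?_ ?_
  · intro a ha; rw [Finset.mem_Icc] at ha; rw [Finset.mem_Ico]; omega
  · intro a _ b _ h; exact_mod_cast h
  · intro b hb; rw [Finset.mem_Ico] at hb
    exact ⟨b.toNat, by rw [Finset.mem_Icc]; omega, by omega⟩
  · intro a _; rfl

lemma toNat_cast' {m : ℤ} (hm : 0 ≤ m) : ((m.toNat : ℕ) : ℝ) = m := by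
  have : ((m.toNat : ℤ) : ℝ) = m := by rw [Int.toNat_of_nonneg hm]
  rwa [Int.cast_natCast] at this

lemma abs_sum_Ico_le (G : ℤ → ℝ) {B : ℝ} (hB : ∀ n, |G n| ≤ B) {a : ℤ} (m : ℤ) (hm : 0 ≤ m) :
    |∑ k ∈ Finset.Ico a (a + m), G k| ≤ m * B := by
  refine (Finset.abs_sum_le_sum_abs _ _).trans ((Finset.sum_le_sum fun k _ => hB k).trans_eq ?_)
  simp only [Finset.sum_const, Int.card_Ico, nsmul_eq_mul, add_sub_cancel_left]
  rw [toNat_cast' hm]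

lemma edge (G : ℤ → ℝ) {B : ℝ} (hB : ∀ n, |G n| ≤ B) {a b : ℤ} (hab : a ≤ b) (m : ℤ) (hm : 0 ≤ m) :
    |∑ k ∈ Finset.Ico (a + m) (b + m), G k - ∑ k ∈ Finset.Ico a b, G k| ≤ 2 * (m * B) := by
  have h1 := sum_Ico_split G (a := a) (b := a + m) (c := b + m) (by omega) (by omega)
  have h2 := sum_Ico_split G (a := a) (b := b) (c := b + m) (by omega) (by omega)
  have h3 := abs_sum_Ico_le G hB (a := a) m hm
  have h4 := abs_sum_Ico_le G hB (a := b) m hm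
  rw [abs_le] at *
  constructor <;> linarith

/-- idempotent error -/
lemma idem_err {s : Finset ℕ} (hs : PS s) {H : ℤ} (hH : 0 < H) (hd : ((PP s : ℕ) : ℤ) ∣ H)
    {f : ℤ → ℝ} (hf : ∀ x, |f x| ≤ 1) (N : ℕ) (x : ℤ) :
    |∑ n ∈ Finset.Icc 1 N, cc s n * gs s H f (x + n) - ∑ n ∈ Finset.Icc 1 N, cc s n * f (x + n)| ≤
      2 * H * (PP s : ℝ) ^ 2 := by
  rw [sum_nat_int (fun n => cc s n * gs s H f (x + n)), sum_nat_int (fun n => cc s n * f (x + n))]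
  have hHR : (0:ℝ) < H := by exact_mod_cast hH
  have e1 : ∑ n ∈ Finset.Ico (1:ℤ) (N + 1), cc s n * gs s H f (x + n) =
      (H : ℝ)⁻¹ * ∑ m ∈ Finset.Ico 0 H, ∑ k ∈ Finset.Ico (1 + m) ((N + 1) + m),
        cc s m * cc s (k - m) * f (x + k) := by
    unfold gs
    simp_rw [Finset.mul_sum]
    rw [Finset.sum_comm]
    refine Finset.sum_congr rfl fun m _ => ?_
    rw [← sum_Ico_shift (fun k => (H : ℝ)⁻¹ * (cc s m * cc s (k - m) * f (x + k)))]
    refine Finset.sum_congr rfl fun n _ => ?_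
    rw [add_sub_cancel_right, add_assoc]; ring
  have e2 : ∑ n ∈ Finset.Ico (1:ℤ) (N + 1), cc s n * f (x + n) =
      (H : ℝ)⁻¹ * ∑ m ∈ Finset.Ico 0 H, ∑ k ∈ Finset.Ico (1:ℤ) (N + 1),
        cc s m * cc s (k - m) * f (x + k) := by
    rw [Finset.sum_comm, Finset.mul_sum]
    refine Finset.sum_congr rfl fun k _ => ?_
    have := cc_conv_self hs hH.le hd k
    rw [zero_add] at this
    rw [← Finset.sum_mul, this]
    field_simp
  rw [e1, e2, ← mul_sub, ← Finset.sum_sub_distrib, abs_mul, abs_of_pos (inv_pos.mpr hHR)]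
  have h3 : ∀ m ∈ Finset.Ico 0 H, |∑ k ∈ Finset.Ico (1 + m) ((N + 1 : ℤ) + m),
        cc s m * cc s (k - m) * f (x + k) - ∑ k ∈ Finset.Ico (1:ℤ) (N + 1),
        cc s m * cc s (k - m) * f (x + k)| ≤ 2 * H * (PP s : ℝ) ^ 2 := by
    intro m hm
    rw [Finset.mem_Ico] at hm
    refine (edge (fun k => cc s m * cc s (k - m) * f (x + k)) (B := (PP s : ℝ) ^ 2) ?_
      (by omega) m hm.1).trans ?_
    · intro k
      rw [abs_mul, abs_mul]
      calc _ ≤ (PP s : ℝ) * PP s * 1 := by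
            have := abs_cc_le hs m; have := abs_cc_le hs (k - m); have := hf (x + k)
            gcongr
        _ = _ := by ring
    · have : (m : ℝ) ≤ H := by exact_mod_cast hm.2.le
      rw [mul_assoc]
      gcongr
  calc _ ≤ (H : ℝ)⁻¹ * ∑ m ∈ Finset.Ico 0 H, 2 * H * (PP s : ℝ) ^ 2 := by
        refine mul_le_mul_of_nonneg_left ?_ (by positivity)
        exact (Finset.abs_sum_le_sum_abs _ _).trans (Finset.sum_le_sum h3)
    _ = _ := by
        simp only [Finset.sum_const, Int.card_Ico, nsmul_eq_mul, sub_zero]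
        rw [toNat_cast' hH.le]
        field_simp

lemma sum_mult {d : ℕ} (hd : 0 < d) (N : ℕ) (G : ℤ → ℝ) :
    ∑ n ∈ Finset.Icc 1 N, (if (d : ℤ) ∣ (n : ℤ) then G n else 0) =
      ∑ i ∈ Finset.Icc 1 (N / d), G ((d : ℤ) * i) := by
  rw [← Finset.sum_filter]
  symm
  refine Finset.sum_bij (fun (i : ℕ) _ => d * i) ?_ ?_ ?_ ?_
  · intro i hi
    rw [Finset.mem_Icc, Nat.le_div_iff_mul_le hd] at hi
    rw [Finset.mem_filter, Finset.mem_Icc]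
    refine ⟨⟨Nat.mul_pos hd hi.1, by linarith [hi.2]⟩, ?_⟩
    push_cast; exact dvd_mul_right _ _
  · intro i _ j _ h; exact Nat.eq_of_mul_eq_mul_left hd h
  · intro n hn
    rw [Finset.mem_filter, Finset.mem_Icc] at hn
    obtain ⟨⟨h1, h2⟩, h3⟩ := hn
    have h3 : d ∣ n := by exact_mod_cast h3
    obtain ⟨i, rfl⟩ := h3
    refine ⟨i, ?_, rfl⟩
    rw [Finset.mem_Icc, Nat.le_div_iff_mul_le hd]
    exact ⟨Nat.pos_of_mul_pos_left h1, by linarith⟩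
  · intro i _; push_cast; rfl

lemma av_le {s : Finset ℕ} (hs : PS s) {N : ℕ} (hN : PP s ≤ N) (g : ℤ → ℝ) (x : ℤ) :
    (N : ℝ)⁻¹ * |∑ n ∈ Finset.Icc 1 N, cc s n * g (x + n)| ≤
      ∑ t ∈ s.powerset, ((N / PP t : ℕ) : ℝ)⁻¹ *
        ∑ i ∈ Finset.Icc 1 (N / PP t), |g (x + ((PP t : ℕ) : ℤ) * i)| := by
  have hN0 : (0:ℝ) < N := by exact_mod_cast (PP_pos hs).trans_le hN
  have h1 : |∑ n ∈ Finset.Icc 1 N, cc s n * g (x + n)| ≤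
      ∑ t ∈ s.powerset, (PP t : ℝ) * ∑ i ∈ Finset.Icc 1 (N / PP t), |g (x + ((PP t : ℕ) : ℤ) * i)| := by
    calc _ ≤ ∑ n ∈ Finset.Icc 1 N, ∑ t ∈ s.powerset,
          (if ((PP t : ℕ) : ℤ) ∣ (n : ℤ) then (PP t : ℝ) * |g (x + n)| else 0) := by
          refine (Finset.abs_sum_le_sum_abs _ _).trans (Finset.sum_le_sum fun n _ => ?_)
          rw [abs_mul]
          refine (mul_le_mul_of_nonneg_right (abs_cc_le_sum s n) (abs_nonneg _)).trans_eq ?_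
          rw [Finset.sum_mul]
          refine Finset.sum_congr rfl fun t ht => ?_
          rw [prod_ite_dvd (hs.mono (Finset.mem_powerset.mp ht)), ite_mul, zero_mul]
      _ = _ := by
          rw [Finset.sum_comm]
          refine Finset.sum_congr rfl fun t ht => ?_
          rw [sum_mult (PP_pos (hs.mono (Finset.mem_powerset.mp ht))) N
            (fun n => (PP t : ℝ) * |g (x + n)|), Finset.mul_sum]
  refine (mul_le_mul_of_nonneg_left h1 (by positivity)).trans ?_
  rw [Finset.mul_sum]
  refine Finset.sum_le_sum fun t ht => ?_
  rw [← mul_assoc]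
  refine mul_le_mul_of_nonneg_right ?_ (Finset.sum_nonneg fun _ _ => abs_nonneg _)
  have hts := Finset.mem_powerset.mp ht
  have ht0 := PP_pos (hs.mono hts)
  have hle : PP t ≤ N := (Nat.le_of_dvd (PP_pos hs) (PP_dvd hts)).trans hN
  have hk : 0 < N / PP t := Nat.div_pos hle ht0
  have hk' : (0:ℝ) < ((N / PP t : ℕ) : ℝ) := by exact_mod_cast hk
  rw [inv_mul_eq_div, div_le_iff₀ hN0, inv_mul_eq_div, le_div_iff₀ hk']
  have : PP t * (N / PP t) ≤ N := Nat.mul_div_le _ _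
  exact_mod_cast this

lemma max_s {s : Finset ℕ} (hs : PS s) (Nf : ℤ → ℕ) {g : ℤ → ℝ} (hg : FS g) (X : Finset ℤ)
    (hX : ∀ x ∈ X, PP s ≤ Nf x) :
    ∑ x ∈ X, ((Nf x : ℝ)⁻¹ * |∑ n ∈ Finset.Icc 1 (Nf x), cc s n * g (x + n)|) ^ 2 ≤
      4 * 4 ^ s.card * En g := by
  have h1 : ∀ x ∈ X, ((Nf x : ℝ)⁻¹ * |∑ n ∈ Finset.Icc 1 (Nf x), cc s n * g (x + n)|) ^ 2 ≤
      2 ^ s.card * ∑ t ∈ s.powerset, (((Nf x / PP t : ℕ) : ℝ)⁻¹ *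
        ∑ i ∈ Finset.Icc 1 (Nf x / PP t), |g (x + ((PP t : ℕ) : ℤ) * i)|) ^ 2 := by
    intro x hx
    refine (pow_le_pow_left₀ (by positivity) (av_le hs (hX x hx) g x) 2).trans ?_
    refine (sq_sum_le_card_mul_sum_sq).trans_eq ?_
    rw [Finset.card_powerset]; push_cast; rfl
  refine (Finset.sum_le_sum h1).trans ?_
  rw [← Finset.mul_sum, Finset.sum_comm]
  have h2 : ∀ t ∈ s.powerset, ∑ x ∈ X, (((Nf x / PP t : ℕ) : ℝ)⁻¹ *
        ∑ i ∈ Finset.Icc 1 (Nf x / PP t), |g (x + ((PP t : ℕ) : ℤ) * i)|) ^ 2 ≤ 4 * En g := by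
    intro t ht
    have hts := Finset.mem_powerset.mp ht
    have ht0 := PP_pos (hs.mono hts)
    refine (strong_max ht0 (fun x => Nf x / PP t) (fun y => |g y|) (fun _ => abs_nonneg _) X ?_).trans ?_
    · intro x hx
      exact Nat.div_pos ((Nat.le_of_dvd (PP_pos hs) (PP_dvd hts)).trans (hX x hx)) ht0
    · refine mul_le_mul_of_nonneg_left ?_ (by norm_num)
      simp only [sq_abs]
      exact sum_le_En hg _
  refine (mul_le_mul_of_nonneg_left (Finset.sum_le_sum h2) (by positivity)).trans_eq ?_
  rw [Finset.sum_const, Finset.card_powerset, nsmul_eq_mul]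
  push_cast
  rw [show (4:ℝ) ^ s.card = 2 ^ s.card * 2 ^ s.card by rw [← mul_pow]; norm_num]
  ring

lemma pow_card_le (K : ℝ) (hK : 1 ≤ K) (δ : ℝ) (hδ : 0 < δ) :
    ∃ C : ℝ, 1 ≤ C ∧ ∀ s : Finset ℕ, PS s → K ^ s.card ≤ C * (PP s : ℝ) ^ δ := by
  obtain ⟨M, hM⟩ : ∃ M : ℕ, ∀ p : ℕ, M ≤ p → K ≤ (p : ℝ) ^ δ := by
    have := ((tendsto_rpow_atTop hδ).comp tendsto_natCast_atTop_atTop).eventually_ge_atTop K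
    obtain ⟨M, hM⟩ := Filter.eventually_atTop.mp this
    exact ⟨M, hM⟩
  refine ⟨K ^ M, one_le_pow₀ hK, fun s hs => ?_⟩
  have h1 : K ^ s.card ≤ ∏ p ∈ s, ((p : ℝ) ^ δ * (if p < M then K else 1)) := by
    rw [← Finset.prod_const]
    refine Finset.prod_le_prod (fun _ _ => by linarith) fun p hp => ?_
    have hp1 : (1:ℝ) ≤ (p : ℝ) ^ δ := by
      refine Real.one_le_rpow ?_ hδ.le
      exact_mod_cast (hs p hp).one_lt.le
    split_ifs with h
    · nlinarith
    · rw [mul_one]; exact hM p (by omega)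
  refine h1.trans ?_
  rw [Finset.prod_mul_distrib, ← Finset.prod_filter, Finset.prod_const, mul_comm]
  have h2 : ∏ p ∈ s, (p : ℝ) ^ δ = (PP s : ℝ) ^ δ := by
    unfold PP; push_cast
    exact Real.finsetProd_rpow _ _ (fun _ _ => by positivity) _
  rw [h2]
  have h3 : (s.filter (· < M)).card ≤ M := by
    calc _ ≤ (Finset.range M).card := Finset.card_le_card fun p hp => by
          simp only [Finset.mem_filter] at hp; simpa using hp.2
      _ = M := by simp
  gcongr

end PM

open scoped BigOperators

namespace PM

/-- length of the local average -/
def HH (s : Finset ℕ) : ℕ := PP s * (32 * (2 ^ Nat.log 2 (PP s)) ^ 4)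

/-- main part -/
noncomputable def Yv (s : Finset ℕ) (f : ℤ → ℝ) (N : ℕ) (x : ℤ) : ℝ :=
  if PP s ≤ N then (N : ℝ)⁻¹ * |∑ n ∈ Finset.Icc 1 N, cc s n * gs s (HH s : ℤ) f (x + n)| else 0

lemma Yv_nonneg (s : Finset ℕ) (f : ℤ → ℝ) (N : ℕ) (x : ℤ) : 0 ≤ Yv s f N x := by
  unfold Yv; split_ifs <;> positivity

lemma sum_Yv {s : Finset ℕ} (hs : PS s) (Nf : ℤ → ℕ) {f : ℤ → ℝ} (hf : FS f) (X : Finset ℤ) :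
    ∑ x ∈ X, Yv s f (Nf x) x ^ 2 ≤ 4 * 4 ^ s.card * En (gs s (HH s : ℤ) f) := by
  have := max_s hs Nf (hf.gs s (HH s : ℤ)) (X.filter fun x => PP s ≤ Nf x)
    (fun x hx => (Finset.mem_filter.mp hx).2)
  refine le_trans (le_of_eq ?_) this
  rw [Finset.sum_filter]
  refine Finset.sum_congr rfl fun x _ => ?_
  unfold Yv
  split_ifs <;> simp

lemma avg_le_Yv {s : Finset ℕ} (hs : PS s) {f : ℤ → ℝ} (hf : ∀ x, |f x| ≤ 1) {N : ℕ}
    (hN : PP s ≤ N) (x : ℤ) :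
    (N : ℝ)⁻¹ * |∑ n ∈ Finset.Icc 1 N, cc s n * f (x + n)| ≤ Yv s f N x + 64 * (PP s : ℝ) ^ 7 / N := by
  have h0 := PP_pos hs
  have hN0 : (0:ℝ) < N := by exact_mod_cast h0.trans_le hN
  have hH : 0 < HH s := by unfold HH; positivity
  have h1 := idem_err hs (H := (HH s : ℤ)) (by exact_mod_cast hH)
    (by exact_mod_cast (dvd_mul_right (PP s) _)) hf N x
  have h2 : (HH s : ℝ) ≤ 32 * (PP s : ℝ) ^ 5 := by
    have : HH s ≤ 32 * PP s ^ 5 := by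
      unfold HH
      have := Nat.pow_log_le_self 2 h0.ne'
      calc _ ≤ PP s * (32 * PP s ^ 4) := by gcongr
        _ = _ := by ring
    exact_mod_cast this
  unfold Yv
  rw [if_pos hN]
  rw [abs_sub_comm] at h1
  have h3 := (abs_sub_abs_le_abs_sub _ _).trans h1
  push_cast at h3
  have h4 : 2 * (HH s : ℝ) * (PP s : ℝ) ^ 2 ≤ 64 * (PP s : ℝ) ^ 7 := by
    calc _ ≤ 2 * (32 * (PP s : ℝ) ^ 5) * (PP s : ℝ) ^ 2 := by gcongr
      _ = _ := by ring
  have h5 : |∑ n ∈ Finset.Icc 1 N, cc s n * f (x + n)| ≤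
      |∑ n ∈ Finset.Icc 1 N, cc s n * gs s (HH s : ℤ) f (x + n)| + 64 * (PP s : ℝ) ^ 7 := by linarith
  refine (mul_le_mul_of_nonneg_left h5 (by positivity : (0:ℝ) ≤ (N:ℝ)⁻¹)).trans_eq ?_
  rw [mul_add]; congr 1; rw [inv_mul_eq_div]

lemma sum_PP_le {SS : Finset (Finset ℕ)} (hS : ∀ s ∈ SS, PS s) {δ : ℝ} (hδ : 1 < δ) :
    ∑ s ∈ SS, (PP s : ℝ) ^ (-δ) ≤ ∑' n : ℕ, (n : ℝ) ^ (-δ) := by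
  have hsum : Summable (fun n : ℕ => (n : ℝ) ^ (-δ)) := Real.summable_nat_rpow.mpr (by linarith)
  have : ∑ s ∈ SS, (PP s : ℝ) ^ (-δ) = ∑ n ∈ SS.image PP, (n : ℝ) ^ (-δ) := by
    rw [Finset.sum_image]
    intro s hs t ht h
    exact PP_inj (hS s hs) (hS t ht) h
  rw [this]
  exact hsum.sum_le_tsum _ fun n _ => by positivity

lemma sum1 : ∃ C : ℝ, 0 < C ∧ ∀ (SS : Finset (Finset ℕ)) (z : ℝ), 0 < z →
    (∀ s ∈ SS, PS s ∧ z ≤ PP s) →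
    ∑ s ∈ SS, ((8:ℝ) ^ s.card / PP s) ^ 2 * (PP s : ℝ) ^ (1/2 : ℝ) ≤ C * z ^ (-(1/8) : ℝ) := by
  obtain ⟨C, hC, h⟩ := pow_card_le 64 (by norm_num) (1/4) (by norm_num)
  set T := ∑' n : ℕ, (n : ℝ) ^ (-(9/8) : ℝ) with hT
  have hT0 : 0 ≤ T := tsum_nonneg fun n => by positivity
  refine ⟨C * (T + 1), by positivity, fun SS z hz hS => ?_⟩
  have h1 : ∀ s ∈ SS, ((8:ℝ) ^ s.card / PP s) ^ 2 * (PP s : ℝ) ^ (1/2 : ℝ) ≤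
      C * z ^ (-(1/8) : ℝ) * (PP s : ℝ) ^ (-(9/8) : ℝ) := by
    intro s hs
    obtain ⟨h2, h3⟩ := hS s hs
    have hP : (0:ℝ) < PP s := by exact_mod_cast PP_pos h2
    have e1 : ((8:ℝ) ^ s.card / PP s) ^ 2 * (PP s : ℝ) ^ (1/2 : ℝ) =
        64 ^ s.card * (PP s : ℝ) ^ (-(3/2) : ℝ) := by
      rw [div_pow, ← pow_mul, mul_comm s.card 2, pow_mul, div_mul_eq_mul_div, mul_div_assoc]
      norm_num
      rw [← Real.rpow_natCast, ← Real.rpow_sub hP]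
      norm_num
    rw [e1]
    calc _ ≤ C * (PP s : ℝ) ^ (1/4 : ℝ) * (PP s : ℝ) ^ (-(3/2) : ℝ) := by
          have := h s h2; gcongr
      _ = C * (PP s : ℝ) ^ (-(1/8) : ℝ) * (PP s : ℝ) ^ (-(9/8) : ℝ) := by
          rw [mul_assoc, mul_assoc, ← Real.rpow_add hP, ← Real.rpow_add hP]; norm_num
      _ ≤ _ := by
          have := Real.rpow_le_rpow_of_nonpos hz h3 (by norm_num : (-(1/8) : ℝ) ≤ 0)
          gcongr
  refine (Finset.sum_le_sum h1).trans ?_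
  rw [← Finset.mul_sum]
  have := sum_PP_le (fun s hs => (hS s hs).1) (δ := 9/8) (by norm_num)
  have hz' : 0 < z ^ (-(1/8) : ℝ) := by positivity
  calc _ ≤ C * z ^ (-(1/8) : ℝ) * (T + 1) := by gcongr; linarith
    _ = _ := by ring

lemma sum2 : ∃ C : ℝ, 0 < C ∧ ∀ (SS : Finset (Finset ℕ)) (f : ℤ → ℝ), FS f → (∀ s ∈ SS, PS s) →
    ∑ s ∈ SS, (PP s : ℝ) ^ (-(1/2) : ℝ) * (4 * 4 ^ s.card * En (gs s (HH s : ℤ) f)) ≤ C * En f := by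
  classical
  obtain ⟨C, hC, h⟩ := pow_card_le 4 (by norm_num) (1/8) (by norm_num)
  set ρ : ℝ := 2 ^ (-(1/4) : ℝ) with hρ
  have hρ0 : 0 < ρ := by positivity
  have hρ1 : ρ < 1 := Real.rpow_lt_one_of_one_lt_of_neg (by norm_num) (by norm_num)
  have hρ2 : 0 < (1 - ρ)⁻¹ := inv_pos.mpr (by linarith)
  refine ⟨12 * C ^ 2 * (1 - ρ)⁻¹, by positivity, fun SS f hf hS => ?_⟩
  set lg : Finset ℕ → ℕ := fun s => Nat.log 2 (PP s) with hlg
  rw [← Finset.sum_fiberwise_of_maps_to (t := SS.image lg) (g := lg)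
    (fun s hs => Finset.mem_image_of_mem _ hs)]
  have key : ∀ j ∈ SS.image lg, ∑ s ∈ SS with lg s = j,
      (PP s : ℝ) ^ (-(1/2) : ℝ) * (4 * 4 ^ s.card * En (gs s (HH s : ℤ) f)) ≤
      ρ ^ j * (12 * C ^ 2 * En f) := by
    intro j _
    set D : ℕ := 2 ^ j with hD
    have hD0 : 0 < D := by positivity
    have hDR : (0:ℝ) < D := by exact_mod_cast hD0
    have hD1 : (1:ℝ) ≤ D := by exact_mod_cast hD0
    set B := SS.filter (fun s => lg s = j) with hB
    have hBP : ∀ s ∈ B, PS s := fun s hs => hS s (Finset.mem_filter.mp hs).1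
    have hBj : ∀ s ∈ B, Nat.log 2 (PP s) = j := fun s hs => (Finset.mem_filter.mp hs).2
    have hB1 : ∀ s ∈ B, D ≤ PP s := fun s hs => by
      rw [hD, ← hBj s hs]; exact Nat.pow_log_le_self 2 (PP_pos (hBP s hs)).ne'
    have hB2 : ∀ s ∈ B, PP s < 2 * D := fun s hs => by
      have := Nat.lt_pow_succ_log_self (b := 2) (by norm_num) (PP s)
      rw [hBj s hs, pow_succ] at this
      rw [hD]; linarith
    have h2D : ((2 * D : ℕ) : ℝ) ^ (1/8 : ℝ) ≤ 2 * (D : ℝ) ^ (1/8 : ℝ) := by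
      push_cast
      rw [Real.mul_rpow (by norm_num) (by positivity)]
      gcongr
      calc (2:ℝ) ^ (1/8 : ℝ) ≤ 2 ^ (1 : ℝ) := Real.rpow_le_rpow_of_exponent_le (by norm_num) (by norm_num)
        _ = 2 := by simp
    have hD8 : 1 ≤ (D : ℝ) ^ (1/8 : ℝ) := Real.one_le_rpow hD1 (by norm_num)
    have hLS := large_sieve hf B hBP hD0 hB1 hB2 (Q := C * (2 * (D : ℝ) ^ (1/8 : ℝ))) (by
      intro s hs
      refine (h s (hBP s hs)).trans ?_
      gcongr
      refine le_trans ?_ h2D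
      gcongr
      exact (hB2 s hs).le) (by positivity)
    have hQ : C * (2 * (D : ℝ) ^ (1/8 : ℝ)) + 1 ≤ 3 * C * (D : ℝ) ^ (1/8 : ℝ) := by nlinarith
    have h3 : ∀ s ∈ B, (PP s : ℝ) ^ (-(1/2) : ℝ) * (4 * 4 ^ s.card * En (gs s (HH s : ℤ) f)) ≤
        4 * C * (D : ℝ) ^ (-(3/8) : ℝ) * En (gs s ((PP s * (32 * D ^ 4) : ℕ) : ℤ) f) := by
      intro s hs
      have e : HH s = PP s * (32 * D ^ 4) := by unfold HH; rw [hBj s hs]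
      rw [e]
      have hP : (0:ℝ) < PP s := by exact_mod_cast PP_pos (hBP s hs)
      rw [← mul_assoc]
      refine mul_le_mul_of_nonneg_right ?_ (En_nonneg _)
      calc _ ≤ (PP s : ℝ) ^ (-(1/2) : ℝ) * (4 * (C * (PP s : ℝ) ^ (1/8 : ℝ))) := by
            have := h s (hBP s hs); gcongr
        _ = 4 * C * (PP s : ℝ) ^ (-(3/8) : ℝ) := by
            rw [show (-(3/8) : ℝ) = -(1/2) + 1/8 by norm_num, Real.rpow_add hP]; ring
        _ ≤ _ := by
            have := Real.rpow_le_rpow_of_nonpos hDR (by exact_mod_cast hB1 s hs : (D : ℝ) ≤ PP s)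
              (by norm_num : (-(3/8) : ℝ) ≤ 0)
            gcongr
    refine (Finset.sum_le_sum h3).trans ?_
    rw [← Finset.mul_sum]
    have hE := En_nonneg f
    calc _ ≤ 4 * C * (D : ℝ) ^ (-(3/8) : ℝ) * (3 * C * (D : ℝ) ^ (1/8 : ℝ) * En f) := by
          refine mul_le_mul_of_nonneg_left (hLS.trans ?_) (by positivity)
          gcongr
      _ = (D : ℝ) ^ (-(1/4) : ℝ) * (12 * C ^ 2 * En f) := by
          rw [show (-(1/4) : ℝ) = -(3/8) + 1/8 by norm_num, Real.rpow_add hDR]; ring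
      _ = _ := by
          rw [hD, hρ]; push_cast
          rw [← Real.rpow_natCast_mul (by norm_num), ← Real.rpow_mul_natCast (by norm_num), mul_comm (j:ℝ)]
  refine (Finset.sum_le_sum key).trans ?_
  rw [← Finset.sum_mul]
  have hgeo : ∑ j ∈ SS.image lg, ρ ^ j ≤ (1 - ρ)⁻¹ := by
    rw [← tsum_geometric_of_lt_one hρ0.le hρ1]
    exact (summable_geometric_of_lt_one hρ0.le hρ1).sum_le_tsum _ fun _ _ => by positivity
  calc _ ≤ (1 - ρ)⁻¹ * (12 * C ^ 2 * En f) :=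
        mul_le_mul_of_nonneg_right hgeo (mul_nonneg (by positivity) (En_nonneg f))
    _ = _ := by ring

lemma high_main : ∃ C : ℝ, 0 < C ∧ ∀ (f : ℤ → ℝ), FS f → ∀ (X : Finset ℤ) (Nf : ℤ → ℕ)
    (SS : Finset (Finset ℕ)) (z : ℝ), 0 < z → (∀ s ∈ SS, PS s ∧ z ≤ PP s) →
    ∑ x ∈ X, (∑ s ∈ SS, (8:ℝ) ^ s.card / PP s * Yv s f (Nf x) x) ^ 2 ≤
      C * z ^ (-(1/8) : ℝ) * En f := by
  obtain ⟨C1, hC1, h1⟩ := sum1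
  obtain ⟨C2, hC2, h2⟩ := sum2
  refine ⟨C1 * C2, by positivity, fun f hf X Nf SS z hz hS => ?_⟩
  have hcs : ∀ x ∈ X, (∑ s ∈ SS, (8:ℝ) ^ s.card / PP s * Yv s f (Nf x) x) ^ 2 ≤
      (C1 * z ^ (-(1/8) : ℝ)) * ∑ s ∈ SS, (PP s : ℝ) ^ (-(1/2) : ℝ) * Yv s f (Nf x) x ^ 2 := by
    intro x _
    have hP : ∀ s ∈ SS, (0:ℝ) < PP s := fun s hs => by exact_mod_cast PP_pos (hS s hs).1
    have := Finset.sum_mul_sq_le_sq_mul_sq SS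
      (fun s => (8:ℝ) ^ s.card / PP s * (PP s : ℝ) ^ (1/4 : ℝ))
      (fun s => (PP s : ℝ) ^ (-(1/4) : ℝ) * Yv s f (Nf x) x)
    have e1 : ∑ s ∈ SS, (8:ℝ) ^ s.card / PP s * (PP s : ℝ) ^ (1/4 : ℝ) *
        ((PP s : ℝ) ^ (-(1/4) : ℝ) * Yv s f (Nf x) x) =
        ∑ s ∈ SS, (8:ℝ) ^ s.card / PP s * Yv s f (Nf x) x := by
      refine Finset.sum_congr rfl fun s hs => ?_
      have : (PP s : ℝ) ^ (1/4 : ℝ) * (PP s : ℝ) ^ (-(1/4) : ℝ) = 1 := by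
        rw [← Real.rpow_add (hP s hs)]; norm_num
      linear_combination ((8:ℝ) ^ s.card / PP s * Yv s f (Nf x) x) * this
    have e2 : ∑ s ∈ SS, ((8:ℝ) ^ s.card / PP s * (PP s : ℝ) ^ (1/4 : ℝ)) ^ 2 =
        ∑ s ∈ SS, ((8:ℝ) ^ s.card / PP s) ^ 2 * (PP s : ℝ) ^ (1/2 : ℝ) := by
      refine Finset.sum_congr rfl fun s hs => ?_
      rw [mul_pow, ← Real.rpow_mul_natCast (hP s hs).le]; norm_num
    have e3 : ∑ s ∈ SS, ((PP s : ℝ) ^ (-(1/4) : ℝ) * Yv s f (Nf x) x) ^ 2 =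
        ∑ s ∈ SS, (PP s : ℝ) ^ (-(1/2) : ℝ) * Yv s f (Nf x) x ^ 2 := by
      refine Finset.sum_congr rfl fun s hs => ?_
      rw [mul_pow, ← Real.rpow_mul_natCast (hP s hs).le]; norm_num
    rw [e1, e2, e3] at this
    refine this.trans (mul_le_mul_of_nonneg_right (h1 SS z hz hS) ?_)
    exact Finset.sum_nonneg fun s hs => by positivity
  refine (Finset.sum_le_sum hcs).trans ?_
  rw [← Finset.mul_sum, Finset.sum_comm]
  have h3 : ∑ s ∈ SS, ∑ x ∈ X, (PP s : ℝ) ^ (-(1/2) : ℝ) * Yv s f (Nf x) x ^ 2 ≤ C2 * En f := by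
    refine le_trans (Finset.sum_le_sum fun s hs => ?_) (h2 SS f hf fun s hs => (hS s hs).1)
    rw [← Finset.mul_sum]
    exact mul_le_mul_of_nonneg_left (sum_Yv (hS s hs).1 Nf hf X) (by positivity)
  calc _ ≤ C1 * z ^ (-(1/8) : ℝ) * (C2 * En f) := by gcongr
    _ = _ := by ring

end PM

open scoped BigOperators

namespace PM

/-- Euler function of the product -/
noncomputable def phi (s : Finset ℕ) : ℝ := ∏ p ∈ s, ((p : ℝ) - 1)

/-- signed inverse -/
noncomputable def eps (s : Finset ℕ) : ℝ := ∏ p ∈ s, (-((p : ℝ) - 1)⁻¹)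

/-- Selberg weight -/
noncomputable def Lam (Q : Finset (Finset ℕ)) (n : ℤ) : ℝ := ∑ q ∈ Q, eps q * cc q n

/-- Selberg normalisation -/
noncomputable def JJ (Q : Finset (Finset ℕ)) : ℝ := ∑ q ∈ Q, (phi q)⁻¹

lemma phi_pos {s : Finset ℕ} (hs : PS s) : 0 < phi s :=
  Finset.prod_pos fun p hp => by
    have : (2:ℝ) ≤ p := by exact_mod_cast (hs p hp).two_le
    linarith

lemma abs_eps {s : Finset ℕ} (hs : PS s) : |eps s| = (phi s)⁻¹ := by
  unfold eps phi
  rw [Finset.abs_prod, ← Finset.prod_inv_distrib]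
  refine Finset.prod_congr rfl fun p hp => ?_
  have : (2:ℝ) ≤ p := by exact_mod_cast (hs p hp).two_le
  rw [abs_neg, abs_of_pos (inv_pos.mpr (by linarith))]

lemma inv_phi_le {s : Finset ℕ} (hs : PS s) : (phi s)⁻¹ ≤ 2 ^ s.card / PP s := by
  unfold phi PP
  push_cast
  rw [← Finset.prod_const, ← Finset.prod_div_distrib, ← Finset.prod_inv_distrib]
  refine Finset.prod_le_prod (fun p hp => ?_) fun p hp => ?_
  · have : (2:ℝ) ≤ p := by exact_mod_cast (hs p hp).two_le
    exact inv_nonneg.mpr (by linarith)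
  · have : (2:ℝ) ≤ p := by exact_mod_cast (hs p hp).two_le
    rw [inv_eq_one_div, div_le_div_iff₀ (by linarith) (by linarith)]
    linarith

lemma eps_mul_cc_coprime {s : Finset ℕ} {n : ℤ} (h : ∀ p ∈ s, ¬ (p : ℤ) ∣ n) :
    eps s * cc s n = (phi s)⁻¹ := by
  unfold eps cc phi
  rw [← Finset.prod_mul_distrib, ← Finset.prod_inv_distrib]
  refine Finset.prod_congr rfl fun p hp => ?_
  unfold cp
  rw [if_neg (h p hp)]; ring

lemma Lam_coprime {Q : Finset (Finset ℕ)} {n : ℤ} (h : ∀ q ∈ Q, ∀ p ∈ q, ¬ (p : ℤ) ∣ n) :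
    Lam Q n = JJ Q := Finset.sum_congr rfl fun q hq => eps_mul_cc_coprime (h q hq)

lemma cc_union {s t : Finset ℕ} (h : Disjoint s t) (n : ℤ) : cc (s ∪ t) n = cc s n * cc t n :=
  Finset.prod_union h

lemma phi_union {s t : Finset ℕ} (h : Disjoint s t) : phi (s ∪ t) = phi s * phi t :=
  Finset.prod_union h

lemma eps_union {s t : Finset ℕ} (h : Disjoint s t) : eps (s ∪ t) = eps s * eps t :=
  Finset.prod_union h

lemma PP_union {s t : Finset ℕ} (h : Disjoint s t) : PP (s ∪ t) = PP s * PP t :=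
  Finset.prod_union h

lemma eps_sq (s : Finset ℕ) : eps s * eps s = (phi s)⁻¹ * (phi s)⁻¹ := by
  unfold eps phi
  rw [← Finset.prod_mul_distrib, ← Finset.prod_inv_distrib, ← Finset.prod_mul_distrib]
  exact Finset.prod_congr rfl fun p _ => by ring

/-- auxiliary product -/
noncomputable def psi (s : Finset ℕ) : ℝ := ∏ p ∈ s, ((p : ℝ) - 2)

lemma psi_nonneg {s : Finset ℕ} (hs : PS s) : 0 ≤ psi s :=
  Finset.prod_nonneg fun p hp => by
    have : (2:ℝ) ≤ p := by exact_mod_cast (hs p hp).two_le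
    linarith

lemma psi_le_phi {s : Finset ℕ} (hs : PS s) : psi s ≤ phi s :=
  Finset.prod_le_prod (fun p hp => by
    have : (2:ℝ) ≤ p := by exact_mod_cast (hs p hp).two_le
    linarith) fun p hp => by linarith

lemma cc_sq (s : Finset ℕ) (n : ℤ) :
    cc s n * cc s n = ∑ g ∈ s.powerset, psi g * phi (s \ g) * cc g n := by
  have h1 : cc s n * cc s n = ∏ p ∈ s, (((p : ℝ) - 2) * cp p n + ((p : ℝ) - 1)) := by
    unfold cc
    rw [← Finset.prod_mul_distrib]
    refine Finset.prod_congr rfl fun p _ => ?_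
    unfold cp
    split_ifs <;> ring
  rw [h1, Finset.prod_add]
  refine Finset.sum_congr rfl fun g _ => ?_
  unfold psi phi cc
  rw [Finset.prod_mul_distrib]; ring

/-- triples -/
def Tri (Q : Finset (Finset ℕ)) : Finset (Σ _ : Finset ℕ × Finset ℕ, Finset ℕ) :=
  (Q ×ˢ Q).sigma fun q => (q.1 ∩ q.2).powerset

/-- the resulting modulus -/
def tD (T : Σ _ : Finset ℕ × Finset ℕ, Finset ℕ) : Finset ℕ :=
  ((T.1.1 \ T.1.2) ∪ (T.1.2 \ T.1.1)) ∪ T.2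

/-- the coefficient -/
noncomputable def tc (T : Σ _ : Finset ℕ × Finset ℕ, Finset ℕ) : ℝ :=
  eps (T.1.1 \ T.1.2) * eps (T.1.2 \ T.1.1) *
    ((phi (T.1.1 ∩ T.1.2))⁻¹ * (phi (T.1.1 ∩ T.1.2))⁻¹) * (psi T.2 * phi ((T.1.1 ∩ T.1.2) \ T.2))

lemma disj1 (s t : Finset ℕ) : Disjoint (s \ t) (s ∩ t) := Finset.disjoint_sdiff_inter s t

lemma disj2 (s t : Finset ℕ) : Disjoint (s \ t) (t \ s) := disjoint_sdiff_sdiff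

lemma disj3 {s t g : Finset ℕ} (hg : g ⊆ s ∩ t) : Disjoint ((s \ t) ∪ (t \ s)) g := by
  rw [Finset.disjoint_left]
  intro x hx hxg
  have := Finset.mem_inter.mp (hg hxg)
  simp only [Finset.mem_union, Finset.mem_sdiff] at hx
  tauto

lemma Lam_sq (Q : Finset (Finset ℕ)) (n : ℤ) : Lam Q n ^ 2 = ∑ T ∈ Tri Q, tc T * cc (tD T) n := by
  unfold Lam Tri
  rw [pow_two, Finset.sum_mul_sum, ← Finset.sum_product', Finset.sum_sigma]
  refine Finset.sum_congr rfl fun q _ => ?_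
  obtain ⟨s, t⟩ := q
  simp only
  have e1 : s \ t ∪ s ∩ t = s := Finset.sdiff_union_inter s t
  have e2 : t \ s ∪ t ∩ s = t := Finset.sdiff_union_inter t s
  have a1 : eps s * cc s n = (eps (s \ t) * eps (s ∩ t)) * (cc (s \ t) n * cc (s ∩ t) n) := by
    rw [← eps_union (disj1 s t), ← cc_union (disj1 s t), e1]
  have a2 : eps t * cc t n = (eps (t \ s) * eps (s ∩ t)) * (cc (t \ s) n * cc (s ∩ t) n) := by
    rw [Finset.inter_comm, ← eps_union (disj1 t s), ← cc_union (disj1 t s), e2]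
  rw [a1, a2]
  have a3 : (eps (s \ t) * eps (s ∩ t)) * (cc (s \ t) n * cc (s ∩ t) n) *
      ((eps (t \ s) * eps (s ∩ t)) * (cc (t \ s) n * cc (s ∩ t) n)) =
      eps (s \ t) * eps (t \ s) * (eps (s ∩ t) * eps (s ∩ t)) * (cc (s \ t) n * cc (t \ s) n) *
        (cc (s ∩ t) n * cc (s ∩ t) n) := by ring
  rw [a3, eps_sq, cc_sq, Finset.mul_sum]
  refine Finset.sum_congr rfl fun g hg => ?_
  have hg := Finset.mem_powerset.mp hg
  unfold tc tD
  simp only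
  rw [cc_union (disj3 hg), cc_union (disj2 s t)]
  ring

lemma mem_Tri {Q : Finset (Finset ℕ)} {T : Σ _ : Finset ℕ × Finset ℕ, Finset ℕ} :
    T ∈ Tri Q ↔ (T.1.1 ∈ Q ∧ T.1.2 ∈ Q) ∧ T.2 ⊆ T.1.1 ∩ T.1.2 := by
  unfold Tri
  rw [Finset.mem_sigma, Finset.mem_product, Finset.mem_powerset]

lemma tc_abs {Q : Finset (Finset ℕ)} (hQ : ∀ q ∈ Q, PS q)
    {T : Σ _ : Finset ℕ × Finset ℕ, Finset ℕ} (hT : T ∈ Tri Q) :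
    |tc T| ≤ (phi (tD T))⁻¹ * (phi ((T.1.1 ∩ T.1.2) \ T.2))⁻¹ := by
  obtain ⟨⟨s, t⟩, g⟩ := T
  rw [mem_Tri] at hT
  simp only at hT
  obtain ⟨⟨hs, ht⟩, hg⟩ := hT
  have hs := hQ s hs
  have ht := hQ t ht
  have hi : PS (s ∩ t) := hs.mono Finset.inter_subset_left
  have hgp : PS g := hi.mono hg
  have hh : PS ((s ∩ t) \ g) := hi.mono Finset.sdiff_subset
  unfold tc tD
  simp only
  rw [phi_union (disj3 hg), phi_union (disj2 s t), abs_mul, abs_mul, abs_mul,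
    abs_eps (hs.mono Finset.sdiff_subset), abs_eps (ht.mono Finset.sdiff_subset)]
  have e : phi (s ∩ t) = phi ((s ∩ t) \ g) * phi g := by
    rw [← phi_union Finset.sdiff_disjoint, Finset.sdiff_union_of_subset hg]
  have p1 := phi_pos hgp
  have p2 := phi_pos hh
  have p3 := phi_pos (hs.mono (Finset.sdiff_subset (t := t)))
  have p4 := phi_pos (ht.mono (Finset.sdiff_subset (t := s)))
  rw [e, abs_of_nonneg (by positivity : 0 ≤ (phi ((s ∩ t) \ g) * phi g)⁻¹ * (phi ((s ∩ t) \ g) * phi g)⁻¹),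
    abs_of_nonneg (mul_nonneg (psi_nonneg hgp) p2.le)]
  have := psi_le_phi hgp
  calc _ ≤ (phi (s \ t))⁻¹ * (phi (t \ s))⁻¹ *
      ((phi ((s ∩ t) \ g) * phi g)⁻¹ * (phi ((s ∩ t) \ g) * phi g)⁻¹) *
        (phi g * phi ((s ∩ t) \ g)) := by gcongr
    _ = _ := by field_simp

/-- coefficients of the square -/
noncomputable def kap (Q : Finset (Finset ℕ)) (d : Finset ℕ) : ℝ :=
  (JJ Q)⁻¹ * ∑ T ∈ Tri Q with tD T = d, tc T

lemma JJ_pos {Q : Finset (Finset ℕ)} (hQ : ∀ q ∈ Q, PS q) (h0 : ∅ ∈ Q) : 0 < JJ Q :=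
  Finset.sum_pos (fun q hq => inv_pos.mpr (phi_pos (hQ q hq))) ⟨∅, h0⟩

lemma Lam_sq' {Q : Finset (Finset ℕ)} (hQ : ∀ q ∈ Q, PS q) (h0 : ∅ ∈ Q) (n : ℤ) :
    (JJ Q)⁻¹ * Lam Q n ^ 2 = ∑ d ∈ (Tri Q).image tD, kap Q d * cc d n := by
  rw [Lam_sq, ← Finset.sum_fiberwise_of_maps_to (t := (Tri Q).image tD) (g := tD)
    (fun s hs => Finset.mem_image_of_mem _ hs), Finset.mul_sum]
  refine Finset.sum_congr rfl fun d _ => ?_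
  unfold kap
  rw [mul_assoc, Finset.sum_mul]
  congr 1
  refine Finset.sum_congr rfl fun T hT => ?_
  rw [(Finset.mem_filter.mp hT).2]

lemma kap_empty {Q : Finset (Finset ℕ)} (hQ : ∀ q ∈ Q, PS q) (h0 : ∅ ∈ Q) : kap Q ∅ = 1 := by
  have hJ := JJ_pos hQ h0
  unfold kap
  rw [inv_mul_eq_iff_eq_mul₀ hJ.ne', mul_one]
  unfold JJ
  symm
  refine Finset.sum_bij (fun q _ => (⟨(q, q), ∅⟩ : Σ _ : Finset ℕ × Finset ℕ, Finset ℕ)) ?_ ?_ ?_ ?_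
  · intro q hq
    rw [Finset.mem_filter, mem_Tri]
    simp [hq, tD]
  · intro q _ q' _ h
    simpa using h
  · rintro ⟨⟨s, t⟩, g⟩ hT
    rw [Finset.mem_filter, mem_Tri] at hT
    simp only [tD, Finset.union_eq_empty, Finset.sdiff_eq_empty_iff_subset] at hT
    obtain ⟨⟨⟨hs, ht⟩, hg⟩, ⟨h1, h2⟩, h3⟩ := hT
    have : s = t := Finset.Subset.antisymm h1 h2
    subst this; subst h3
    exact ⟨s, hs, rfl⟩
  · intro q hq
    have := (phi_pos (hQ q hq)).ne'
    unfold tc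
    simp [eps, psi]
    field_simp

lemma kap_abs {Q : Finset (Finset ℕ)} (hQ : ∀ q ∈ Q, PS q) (h0 : ∅ ∈ Q)
    (hdown : ∀ q ∈ Q, ∀ h ⊆ q, h ∈ Q) {d : Finset ℕ} (hd : PS d) :
    |kap Q d| ≤ 4 ^ d.card * (phi d)⁻¹ := by
  have hJ := JJ_pos hQ h0
  have hφ := phi_pos hd
  have h1 : ∑ T ∈ Tri Q with tD T = d, |tc T| ≤
      ∑ T ∈ Tri Q with tD T = d, (phi d)⁻¹ * (phi ((T.1.1 ∩ T.1.2) \ T.2))⁻¹ := by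
    refine Finset.sum_le_sum fun T hT => ?_
    rw [Finset.mem_filter] at hT
    have := tc_abs hQ hT.1
    rwa [hT.2] at this
  have h2 : ∑ T ∈ Tri Q with tD T = d, (phi ((T.1.1 ∩ T.1.2) \ T.2))⁻¹ ≤ 
      ∑ y ∈ (d.powerset ×ˢ d.powerset) ×ˢ Q, (phi y.2)⁻¹ := by
    set F : (Σ _ : Finset ℕ × Finset ℕ, Finset ℕ) → (Finset ℕ × Finset ℕ) × Finset ℕ :=
      fun T => ((T.1.1 \ T.1.2, T.1.2 \ T.1.1), (T.1.1 ∩ T.1.2) \ T.2) with hF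
    have hinj : Set.InjOn F ((Tri Q).filter (fun T => tD T = d) : Finset _) := by
      rintro ⟨⟨s, t⟩, g⟩ hT ⟨⟨s', t'⟩, g'⟩ hT' hTT
      rw [Finset.mem_coe, Finset.mem_filter, mem_Tri] at hT hT'
      simp only [tD] at hT hT'
      simp only [hF, Prod.mk.injEq] at hTT
      obtain ⟨⟨⟨hs, ht⟩, hg⟩, hd1⟩ := hT
      obtain ⟨⟨⟨hs', ht'⟩, hg'⟩, hd2⟩ := hT'
      obtain ⟨⟨e1, e2⟩, e3⟩ := hTT
      have eg : g = g' := by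
        have q1 : g = d \ ((s \ t) ∪ (t \ s)) := by
          rw [← hd1, Finset.union_sdiff_cancel_left (disj3 hg)]
        have q2 : g' = d \ ((s' \ t') ∪ (t' \ s')) := by
          rw [← hd2, Finset.union_sdiff_cancel_left (disj3 hg')]
        rw [q1, q2, e1, e2]
      subst eg
      have ei : s ∩ t = s' ∩ t' := by
        rw [← Finset.sdiff_union_of_subset hg, ← Finset.sdiff_union_of_subset hg', e3]
      have es : s = s' := by
        rw [← Finset.sdiff_union_inter s t, ← Finset.sdiff_union_inter s' t', e1, ei]
      have et : t = t' := by
        rw [← Finset.sdiff_union_inter t s, ← Finset.sdiff_union_inter t' s', e2,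
          Finset.inter_comm t s, Finset.inter_comm t' s', ei]
      rw [es, et]
    rw [← Finset.sum_image (f := fun y : (Finset ℕ × Finset ℕ) × Finset ℕ => (phi y.2)⁻¹) hinj]
    refine Finset.sum_le_sum_of_subset_of_nonneg ?_ ?_
    · intro y hy
      rw [Finset.mem_image] at hy
      obtain ⟨⟨⟨s, t⟩, g⟩, hT, rfl⟩ := hy
      rw [Finset.mem_filter, mem_Tri] at hT
      obtain ⟨⟨⟨hs, ht⟩, hg⟩, hd1⟩ := hT
      simp only [tD] at hd1
      simp only [hF, Finset.mem_product, Finset.mem_powerset]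
      refine ⟨⟨?_, ?_⟩, hdown s hs _ (Finset.sdiff_subset.trans Finset.inter_subset_left)⟩
      · rw [← hd1]; exact Finset.subset_union_left.trans Finset.subset_union_left
      · rw [← hd1]; exact Finset.subset_union_right.trans Finset.subset_union_left
    · intro y hy _
      rw [Finset.mem_product] at hy
      exact (inv_pos.mpr (phi_pos (hQ _ hy.2))).le
  have h3 : ∑ y ∈ (d.powerset ×ˢ d.powerset) ×ˢ Q, (phi y.2)⁻¹ = 4 ^ d.card * JJ Q := by
    rw [Finset.sum_product]
    simp only [Finset.sum_const, Finset.card_product, Finset.card_powerset, nsmul_eq_mul]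
    push_cast
    rw [← mul_pow]; norm_num
    rfl
  unfold kap
  rw [abs_mul, abs_of_pos (inv_pos.mpr hJ), inv_mul_le_iff₀ hJ]
  refine (Finset.abs_sum_le_sum_abs _ _).trans (h1.trans ?_)
  rw [← Finset.mul_sum]
  calc _ ≤ (phi d)⁻¹ * (4 ^ d.card * JJ Q) := by rw [← h3]; gcongr
    _ = _ := by ring

end PM

open scoped BigOperators

namespace PM

/-- primes up to `Z` -/
def pA (Z : ℕ) : Finset ℕ := (Finset.range (Z + 1)).filter Nat.Prime

/-- primes in `(Z, R]` -/
def pB (Z R : ℕ) : Finset ℕ := (Finset.Ioc Z R).filter Nat.Prime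

/-- Selberg support -/
def QQ (Z R : ℕ) : Finset (Finset ℕ) := (pB Z R).powerset.filter fun q => PP q ≤ R

lemma PS_pA (Z : ℕ) : PS (pA Z) := fun _ hp => (Finset.mem_filter.mp hp).2
lemma PS_pB (Z R : ℕ) : PS (pB Z R) := fun _ hp => (Finset.mem_filter.mp hp).2

lemma disj_AB (Z R : ℕ) : Disjoint (pA Z) (pB Z R) := by
  rw [Finset.disjoint_left]
  intro p h1 h2
  simp only [pA, pB, Finset.mem_filter, Finset.mem_range, Finset.mem_Ioc] at h1 h2
  omega

lemma mem_QQ {Z R : ℕ} {q : Finset ℕ} : q ∈ QQ Z R ↔ q ⊆ pB Z R ∧ PP q ≤ R := by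
  unfold QQ; rw [Finset.mem_filter, Finset.mem_powerset]

lemma QQ_PS {Z R : ℕ} : ∀ q ∈ QQ Z R, PS q := fun _ hq => (PS_pB Z R).mono (mem_QQ.mp hq).1

lemma QQ_empty {Z R : ℕ} (hR : 1 ≤ R) : ∅ ∈ QQ Z R := mem_QQ.mpr ⟨by simp, by simpa [PP] using hR⟩

lemma QQ_down {Z R : ℕ} : ∀ q ∈ QQ Z R, ∀ h ⊆ q, h ∈ QQ Z R := fun q hq h hh =>
  mem_QQ.mpr ⟨hh.trans (mem_QQ.mp hq).1,
    (Nat.le_of_dvd (PP_pos (QQ_PS q hq)) (PP_dvd hh)).trans (mem_QQ.mp hq).2⟩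

/-- small primes sieve weight -/
noncomputable def SA (Z : ℕ) (n : ℤ) : ℝ := ∏ p ∈ pA Z, (1 + (-((p : ℝ) - 1)⁻¹) * cp p n)

/-- its maximum -/
noncomputable def VI (Z : ℕ) : ℝ := ∏ p ∈ pA Z, ((p : ℝ) / ((p : ℝ) - 1))

lemma SA_expand (Z : ℕ) (n : ℤ) : SA Z n = ∑ a ∈ (pA Z).powerset, eps a * cc a n := by
  unfold SA
  rw [Finset.prod_one_add]
  refine Finset.sum_congr rfl fun a _ => ?_
  unfold eps cc
  rw [Finset.prod_mul_distrib]

lemma SA_factor {p : ℕ} (hp : p.Prime) (n : ℤ) :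
    1 + (-((p : ℝ) - 1)⁻¹) * cp p n = if (p : ℤ) ∣ n then 0 else (p : ℝ) / ((p : ℝ) - 1) := by
  have : (2:ℝ) ≤ p := by exact_mod_cast hp.two_le
  have h : (p : ℝ) - 1 ≠ 0 := by linarith
  unfold cp
  split_ifs
  · field_simp; ring
  · field_simp; ring

lemma fac_pos {p : ℕ} (hp : p.Prime) : 0 < (p : ℝ) / ((p : ℝ) - 1) := by
  have : (2:ℝ) ≤ p := by exact_mod_cast hp.two_le
  exact div_pos (by linarith) (by linarith)

lemma SA_nonneg (Z : ℕ) (n : ℤ) : 0 ≤ SA Z n := by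
  refine Finset.prod_nonneg fun p hp => ?_
  rw [SA_factor (PS_pA Z p hp)]
  split_ifs
  · exact le_rfl
  · exact (fac_pos (PS_pA Z p hp)).le

lemma SA_le (Z : ℕ) (n : ℤ) : SA Z n ≤ VI Z := by
  refine Finset.prod_le_prod (fun p hp => ?_) fun p hp => ?_
  · rw [SA_factor (PS_pA Z p hp)]
    split_ifs
    · exact le_rfl
    · exact (fac_pos (PS_pA Z p hp)).le
  · rw [SA_factor (PS_pA Z p hp)]
    split_ifs
    · exact (fac_pos (PS_pA Z p hp)).le
    · exact le_rfl

lemma SA_coprime {Z : ℕ} {n : ℤ} (h : ∀ p ∈ pA Z, ¬ (p : ℤ) ∣ n) : SA Z n = VI Z := by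
  refine Finset.prod_congr rfl fun p hp => ?_
  rw [SA_factor (PS_pA Z p hp), if_neg (h p hp)]

/-- the sieve majorant -/
noncomputable def nu (Z R : ℕ) (n : ℤ) : ℝ := SA Z n * ((JJ (QQ Z R))⁻¹ * Lam (QQ Z R) n ^ 2)

lemma nu_nonneg (Z : ℕ) {R : ℕ} (hR : 1 ≤ R) (n : ℤ) : 0 ≤ nu Z R n := by
  have := JJ_pos (Q := QQ Z R) QQ_PS (QQ_empty hR)
  have := SA_nonneg Z n
  unfold nu; positivity

lemma nu_prime {Z R p : ℕ} (hR : 1 ≤ R) (hZR : Z ≤ R) (hp : p.Prime) (hpR : R < p) :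
    nu Z R p = VI Z * JJ (QQ Z R) := by
  have hJ := JJ_pos (Q := QQ Z R) QQ_PS (QQ_empty hR)
  have key : ∀ q : ℕ, q.Prime → q ≤ R → ¬ (q : ℤ) ∣ (p : ℤ) := by
    intro q hq hqR hd
    have hd : q ∣ p := by exact_mod_cast hd
    have := (Nat.prime_dvd_prime_iff_eq hq hp).mp hd
    omega
  unfold nu
  rw [SA_coprime, Lam_coprime]
  · field_simp
  · intro q hq r hr
    have h1 := (mem_QQ.mp hq).1 hr
    simp only [pB, Finset.mem_filter, Finset.mem_Ioc] at h1
    exact key r h1.2 h1.1.2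
  · intro q hq
    simp only [pA, Finset.mem_filter, Finset.mem_range] at hq
    exact key q hq.2 (by omega)

/-- nontrivial moduli -/
def DD (Z R : ℕ) : Finset (Finset ℕ) := ((Tri (QQ Z R)).image tD).erase ∅

lemma DD_sub {Z R : ℕ} {d : Finset ℕ} (hd : d ∈ DD Z R) :
    d ⊆ pB Z R ∧ PP d ≤ R ^ 2 ∧ d.Nonempty := by
  unfold DD at hd
  rw [Finset.mem_erase, Finset.mem_image] at hd
  obtain ⟨hne, ⟨⟨s, t⟩, g⟩, hT, rfl⟩ := hd
  rw [mem_Tri] at hT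
  simp only at hT
  obtain ⟨⟨hs, ht⟩, hg⟩ := hT
  have h1 : tD ⟨(s, t), g⟩ ⊆ s ∪ (t \ s) := by
    unfold tD
    intro x hx
    simp only [Finset.mem_union, Finset.mem_sdiff] at hx ⊢
    have : x ∈ g → x ∈ s := fun h => (Finset.mem_inter.mp (hg h)).1
    tauto
  have h2 : s ∪ (t \ s) ⊆ pB Z R :=
    Finset.union_subset (mem_QQ.mp hs).1 (Finset.sdiff_subset.trans (mem_QQ.mp ht).1)
  refine ⟨h1.trans h2, ?_, Finset.nonempty_iff_ne_empty.mpr hne⟩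
  calc PP (tD ⟨(s, t), g⟩) ≤ PP (s ∪ (t \ s)) :=
        Nat.le_of_dvd (PP_pos ((PS_pB Z R).mono h2)) (PP_dvd h1)
    _ = PP s * PP (t \ s) := PP_union Finset.disjoint_sdiff
    _ ≤ R * R := Nat.mul_le_mul (mem_QQ.mp hs).2
        ((Nat.le_of_dvd (PP_pos (QQ_PS t ht)) (PP_dvd Finset.sdiff_subset)).trans (mem_QQ.mp ht).2)
    _ = R ^ 2 := by ring

lemma nu_expand {Z R : ℕ} (hR : 1 ≤ R) (n : ℤ) :
    nu Z R n = SA Z n + ∑ a ∈ (pA Z).powerset, ∑ d ∈ DD Z R, eps a * kap (QQ Z R) d * cc (a ∪ d) n := by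
  have h0 : ∅ ∈ (Tri (QQ Z R)).image tD := by
    rw [Finset.mem_image]
    refine ⟨⟨(∅, ∅), ∅⟩, ?_, by simp [tD]⟩
    rw [mem_Tri]
    exact ⟨⟨QQ_empty hR, QQ_empty hR⟩, by simp⟩
  unfold nu
  rw [Lam_sq' QQ_PS (QQ_empty hR), ← Finset.add_sum_erase _ _ h0, kap_empty QQ_PS (QQ_empty hR),
    mul_add]
  congr 1
  · simp [cc]
  · rw [SA_expand, Finset.sum_mul_sum]
    refine Finset.sum_congr rfl fun a ha => Finset.sum_congr rfl fun d hd => ?_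
    rw [cc_union]
    · ring
    · exact Disjoint.mono (Finset.mem_powerset.mp ha) (DD_sub hd).1 (disj_AB Z R)

lemma coef_le {Z R : ℕ} (hR : 1 ≤ R) {a d : Finset ℕ} (ha : a ⊆ pA Z) (hd : d ∈ DD Z R) :
    |eps a * kap (QQ Z R) d| ≤ 2 ^ a.card / PP a * (8 ^ d.card / PP d) := by
  have hdP := (PS_pB Z R).mono (DD_sub hd).1
  have haP := (PS_pA Z).mono ha
  rw [abs_mul, abs_eps haP]
  have h1 := inv_phi_le haP
  have h2 := kap_abs (Q := QQ Z R) QQ_PS (QQ_empty hR) QQ_down hdP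
  have h3 := inv_phi_le hdP
  have := inv_pos.mpr (phi_pos haP)
  refine mul_le_mul h1 (h2.trans ?_) (abs_nonneg _) (by positivity)
  calc (4:ℝ) ^ d.card * (phi d)⁻¹ ≤ 4 ^ d.card * (2 ^ d.card / PP d) := by gcongr
    _ = (4 * 2) ^ d.card / PP d := by rw [mul_pow]; ring
    _ = _ := by norm_num

lemma avg_cc_le {s : Finset ℕ} (hs : PS s) {N : ℕ} (hN : 0 < N) {f : ℤ → ℝ} (hf : ∀ x, |f x| ≤ 1)
    (x : ℤ) : (N : ℝ)⁻¹ * |∑ n ∈ Finset.Icc 1 N, cc s n * f (x + n)| ≤ 2 ^ s.card := by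
  have hNR : (0:ℝ) < N := by exact_mod_cast hN
  rw [inv_mul_le_iff₀ hNR]
  calc _ ≤ ∑ n ∈ Finset.Icc 1 N, ∑ t ∈ s.powerset,
        (if ((PP t : ℕ) : ℤ) ∣ (n : ℤ) then (PP t : ℝ) else 0) := by
        refine (Finset.abs_sum_le_sum_abs _ _).trans (Finset.sum_le_sum fun n _ => ?_)
        rw [abs_mul]
        calc _ ≤ |cc s n| * 1 := mul_le_mul_of_nonneg_left (hf _) (abs_nonneg _)
          _ = |cc s n| := mul_one _
          _ ≤ _ := (abs_cc_le_sum s n).trans_eq ?_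
        exact Finset.sum_congr rfl fun t ht => prod_ite_dvd (hs.mono (Finset.mem_powerset.mp ht)) n
    _ ≤ ∑ t ∈ s.powerset, (N : ℝ) := by
        rw [Finset.sum_comm]
        refine Finset.sum_le_sum fun t ht => ?_
        rw [sum_mult (PP_pos (hs.mono (Finset.mem_powerset.mp ht))) N (fun _ => (PP t : ℝ))]
        simp only [Finset.sum_const, Nat.card_Icc, nsmul_eq_mul, Nat.add_sub_cancel]
        exact_mod_cast Nat.div_mul_le_self N (PP t)
    _ = _ := by
        rw [Finset.sum_const, Finset.card_powerset, nsmul_eq_mul]; push_cast; ring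

instance PS_dec (s : Finset ℕ) : Decidable (PS s) := by unfold PS; infer_instance

/-- universal family of moduli -/
def SU (Z M : ℕ) : Finset (Finset ℕ) :=
  (Finset.range (M + 1)).powerset.filter fun s => PS s ∧ Z ≤ PP s ∧ PP s ≤ M

lemma mem_SU {Z M : ℕ} {s : Finset ℕ} : s ∈ SU Z M ↔ PS s ∧ Z ≤ PP s ∧ PP s ≤ M := by
  unfold SU
  rw [Finset.mem_filter, Finset.mem_powerset]
  constructor
  · exact fun h => h.2
  · intro h
    refine ⟨fun p hp => ?_, h⟩
    have : p ≤ PP s := Nat.le_of_dvd (PP_pos h.1) (Finset.dvd_prod_of_mem _ hp)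
    rw [Finset.mem_range]; omega

lemma two_pow_card_le {s : Finset ℕ} (hs : PS s) : 2 ^ s.card ≤ PP s := by
  rw [← Finset.prod_const]
  exact Finset.prod_le_prod' fun p hp => (hs p hp).two_le

lemma union_mem {Z R : ℕ} {a d : Finset ℕ} (ha : a ⊆ pA Z) (ha2 : PP a ≤ R ^ 2)
    (hd : d ∈ DD Z R) : a ∪ d ∈ SU Z (R ^ 4) := by
  obtain ⟨h1, h2, p, hp⟩ := DD_sub hd
  have haP := (PS_pA Z).mono ha
  have hdP := (PS_pB Z R).mono h1
  have hdis : Disjoint a d := Disjoint.mono ha h1 (disj_AB Z R)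
  rw [mem_SU, PP_union hdis]
  refine ⟨?_, ?_, ?_⟩
  · intro q hq
    rcases Finset.mem_union.mp hq with h | h
    · exact haP q h
    · exact hdP q h
  · have hpZ : Z < p := by
      have := h1 hp
      simp only [pB, Finset.mem_filter, Finset.mem_Ioc] at this
      exact this.1.1
    have : p ≤ PP d := Nat.le_of_dvd (PP_pos hdP) (Finset.dvd_prod_of_mem _ hp)
    have := PP_pos haP
    nlinarith
  · calc _ ≤ R ^ 2 * R ^ 2 := Nat.mul_le_mul ha2 h2
      _ = _ := by ring

lemma union_inj {a a' d d' U W : Finset ℕ} (h1 : a ⊆ U) (h2 : a' ⊆ U) (h3 : d ⊆ W) (h4 : d' ⊆ W)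
    (hUW : Disjoint U W) (e : a ∪ d = a' ∪ d') : a = a' := by
  have key : ∀ b c : Finset ℕ, b ⊆ U → c ⊆ W → (b ∪ c) ∩ U = b := by
    intro b c hb hc
    rw [Finset.union_inter_distrib_right, Finset.inter_eq_left.mpr hb,
      Finset.disjoint_iff_inter_eq_empty.mp (Disjoint.mono_left hc hUW.symm), Finset.union_empty]
  rw [← key a d h1 h3, ← key a' d' h2 h4, e]

lemma low_part {Z R N M : ℕ} (hR : 1 ≤ R) (hRN : R ^ 4 ≤ N) (hM : R ^ 4 ≤ M) {f : ℤ → ℝ}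
    (hf : ∀ x, |f x| ≤ 1) (x : ℤ) :
    ∑ a ∈ (pA Z).powerset with PP a ≤ R ^ 2, ∑ d ∈ DD Z R, |eps a * kap (QQ Z R) d| *
      ((N : ℝ)⁻¹ * |∑ n ∈ Finset.Icc 1 N, cc (a ∪ d) n * f (x + n)|) ≤
    ∑ s ∈ SU Z M, (8:ℝ) ^ s.card / PP s * Yv s f N x + 64 * (R : ℝ) ^ 40 / N := by
  have hN0 : (0:ℝ) < N := by
    have : 0 < R ^ 4 := by positivity
    exact_mod_cast this.trans_le hRN
  have step1 : ∑ a ∈ (pA Z).powerset with PP a ≤ R ^ 2, ∑ d ∈ DD Z R, |eps a * kap (QQ Z R) d| *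
      ((N : ℝ)⁻¹ * |∑ n ∈ Finset.Icc 1 N, cc (a ∪ d) n * f (x + n)|) ≤
      ∑ s ∈ SU Z (R ^ 4), (8:ℝ) ^ s.card / PP s * (Yv s f N x + 64 * (PP s : ℝ) ^ 7 / N) := by
    rw [← Finset.sum_product']
    have hinj : Set.InjOn (fun y : Finset ℕ × Finset ℕ => y.1 ∪ y.2)
        (((pA Z).powerset.filter (fun a => PP a ≤ R ^ 2) ×ˢ DD Z R : Finset _) : Set _) := by
      rintro ⟨a, d⟩ h ⟨a', d'⟩ h' e
      simp only [Finset.coe_product, Set.mem_prod, Finset.mem_coe, Finset.mem_filter,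
        Finset.mem_powerset] at h h' e
      have k1 := (DD_sub h.2).1
      have k2 := (DD_sub h'.2).1
      have ea := union_inj h.1.1 h'.1.1 k1 k2 (disj_AB Z R) e
      have ed := union_inj (a := d) (a' := d') (d := a) (d' := a') k1 k2 h.1.1 h'.1.1
        (disj_AB Z R).symm (by rw [Finset.union_comm, e, Finset.union_comm])
      rw [ea, ed]
    calc _ ≤ ∑ y ∈ (pA Z).powerset.filter (fun a => PP a ≤ R ^ 2) ×ˢ DD Z R,
          (8:ℝ) ^ (y.1 ∪ y.2).card / PP (y.1 ∪ y.2) *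
            (Yv (y.1 ∪ y.2) f N x + 64 * (PP (y.1 ∪ y.2) : ℝ) ^ 7 / N) := by
          refine Finset.sum_le_sum ?_
          rintro ⟨a, d⟩ h
          simp only [Finset.mem_product, Finset.mem_filter, Finset.mem_powerset] at h ⊢
          have hm := mem_SU.mp (union_mem h.1.1 h.1.2 h.2)
          have hdis : Disjoint a d := Disjoint.mono h.1.1 (DD_sub h.2).1 (disj_AB Z R)
          refine mul_le_mul ((coef_le hR h.1.1 h.2).trans ?_)
            (avg_le_Yv hm.1 hf (hm.2.2.trans hRN) x) (by positivity) (by positivity)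
          rw [PP_union hdis, Finset.card_union_of_disjoint hdis, pow_add, Nat.cast_mul, div_mul_div_comm]
          gcongr
          norm_num
      _ = ∑ s ∈ ((pA Z).powerset.filter (fun a => PP a ≤ R ^ 2) ×ˢ DD Z R).image
            (fun y : Finset ℕ × Finset ℕ => y.1 ∪ y.2),
          (8:ℝ) ^ s.card / PP s * (Yv s f N x + 64 * (PP s : ℝ) ^ 7 / N) := by
          rw [Finset.sum_image hinj]
      _ ≤ _ := by
          refine Finset.sum_le_sum_of_subset_of_nonneg ?_ ?_
          · intro s hs
            rw [Finset.mem_image] at hs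
            obtain ⟨⟨a, d⟩, h, rfl⟩ := hs
            simp only [Finset.mem_product, Finset.mem_filter, Finset.mem_powerset] at h ⊢
            exact union_mem h.1.1 h.1.2 h.2
          · intro s _ _
            have := Yv_nonneg s f N x
            positivity
  refine step1.trans ?_
  simp_rw [mul_add, Finset.sum_add_distrib]
  refine add_le_add ?_ ?_
  · refine Finset.sum_le_sum_of_subset_of_nonneg ?_ ?_
    · intro s hs
      rw [mem_SU] at hs ⊢
      exact ⟨hs.1, hs.2.1, hs.2.2.trans hM⟩
    · intro s _ _
      have := Yv_nonneg s f N x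
      positivity
  · have hcard : (SU Z (R ^ 4)).card ≤ R ^ 4 := by
      have : (SU Z (R ^ 4)).card ≤ (Finset.Icc 1 (R ^ 4)).card := by
        refine Finset.card_le_card_of_injOn PP (fun s hs => ?_) fun s hs t ht h => ?_
        · have := mem_SU.mp hs
          simp only [Finset.coe_Icc, Set.mem_Icc]
          exact ⟨PP_pos this.1, this.2.2⟩
        · exact PP_inj (mem_SU.mp hs).1 (mem_SU.mp ht).1 h
      simpa using this
    calc _ ≤ ∑ s ∈ SU Z (R ^ 4), 64 * (R : ℝ) ^ 36 / N := by
          refine Finset.sum_le_sum fun s hs => ?_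
          have hm := mem_SU.mp hs
          have hP : (0:ℝ) < PP s := by exact_mod_cast PP_pos hm.1
          have h8 : (8:ℝ) ^ s.card ≤ (PP s : ℝ) ^ 3 := by
            have : ((2:ℝ) ^ s.card) ≤ PP s := by exact_mod_cast two_pow_card_le hm.1
            calc (8:ℝ) ^ s.card = (2 ^ s.card) ^ 3 := by rw [← pow_mul, mul_comm, pow_mul]; norm_num
              _ ≤ _ := by gcongr
          have hPR : (PP s : ℝ) ≤ (R : ℝ) ^ 4 := by exact_mod_cast hm.2.2
          calc _ ≤ (PP s : ℝ) ^ 3 / PP s * (64 * (PP s : ℝ) ^ 7 / N) := by gcongr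
            _ = 64 * (PP s : ℝ) ^ 9 / N := by field_simp
            _ ≤ 64 * ((R : ℝ) ^ 4) ^ 9 / N := by gcongr
            _ = _ := by ring
      _ = (SU Z (R ^ 4)).card * (64 * (R : ℝ) ^ 36 / N) := by rw [Finset.sum_const, nsmul_eq_mul]
      _ ≤ (R : ℝ) ^ 4 * (64 * (R : ℝ) ^ 36 / N) := by
          gcongr; exact_mod_cast hcard
      _ = _ := by ring

lemma tail_part {Z R N : ℕ} (hR : 1 ≤ R) (hN : 0 < N) {f : ℤ → ℝ}
    (hf : ∀ x, |f x| ≤ 1) (x : ℤ) :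
    ∑ a ∈ (pA Z).powerset with ¬ PP a ≤ R ^ 2, ∑ d ∈ DD Z R, |eps a * kap (QQ Z R) d| *
      ((N : ℝ)⁻¹ * |∑ n ∈ Finset.Icc 1 N, cc (a ∪ d) n * f (x + n)|) ≤
    (∑ a ∈ (pA Z).powerset with ¬ PP a ≤ R ^ 2, (4:ℝ) ^ a.card / PP a) *
      ∏ p ∈ pB Z R, (1 + 16 / (p : ℝ)) := by
  have e : ∏ p ∈ pB Z R, (1 + 16 / (p : ℝ)) = ∑ d ∈ (pB Z R).powerset, (16:ℝ) ^ d.card / PP d := by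
    rw [Finset.prod_one_add]
    refine Finset.sum_congr rfl fun d _ => ?_
    rw [Finset.prod_div_distrib, Finset.prod_const, PP]; push_cast; rfl
  rw [e, Finset.sum_mul]
  refine Finset.sum_le_sum fun a ha => ?_
  rw [Finset.mem_filter, Finset.mem_powerset] at ha
  rw [Finset.mul_sum]
  refine le_trans ?_ (Finset.sum_le_sum_of_subset_of_nonneg (s := DD Z R)
    (fun d hd => Finset.mem_powerset.mpr (DD_sub hd).1) fun d _ _ => by positivity)
  refine Finset.sum_le_sum fun d hd => ?_
  have hdis : Disjoint a d := Disjoint.mono ha.1 (DD_sub hd).1 (disj_AB Z R)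
  have hP : PS (a ∪ d) := by
    intro q hq
    rcases Finset.mem_union.mp hq with h | h
    · exact PS_pA Z q (ha.1 h)
    · exact PS_pB Z R q ((DD_sub hd).1 h)
  refine (mul_le_mul (coef_le hR ha.1 hd) (avg_cc_le hP hN hf x) (by positivity)
    (by positivity)).trans_eq ?_
  rw [Finset.card_union_of_disjoint hdis, pow_add, show (4:ℝ) = 2 * 2 by norm_num,
    show (16:ℝ) = 8 * 2 by norm_num, mul_pow, mul_pow]
  ring

lemma pointwise {Z R N M : ℕ} (hR : 1 ≤ R) (hRN : R ^ 4 ≤ N) (hM : R ^ 4 ≤ M) {f : ℤ → ℝ}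
    (hf0 : ∀ x, 0 ≤ f x) (hf1 : ∀ x, f x ≤ 1) (x : ℤ) :
    (N : ℝ)⁻¹ * ∑ n ∈ Finset.Icc 1 N, nu Z R n * f (x + n) ≤
      VI Z * ((N : ℝ)⁻¹ * ∑ n ∈ Finset.Icc 1 N, f (x + n)) +
      ∑ s ∈ SU Z M, (8:ℝ) ^ s.card / PP s * Yv s f N x + 64 * (R : ℝ) ^ 40 / N +
      (∑ a ∈ (pA Z).powerset with ¬ PP a ≤ R ^ 2, (4:ℝ) ^ a.card / PP a) *
        ∏ p ∈ pB Z R, (1 + 16 / (p : ℝ)) := by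
  have hf : ∀ x, |f x| ≤ 1 := fun x => by rw [abs_of_nonneg (hf0 x)]; exact hf1 x
  have hN : 0 < N := lt_of_lt_of_le (by positivity) hRN
  have hN0 : (0:ℝ) < N := by exact_mod_cast hN
  have e : ∑ n ∈ Finset.Icc 1 N, nu Z R n * f (x + n) =
      ∑ n ∈ Finset.Icc 1 N, SA Z n * f (x + n) +
      ∑ a ∈ (pA Z).powerset, ∑ d ∈ DD Z R, (eps a * kap (QQ Z R) d) *
        ∑ n ∈ Finset.Icc 1 N, cc (a ∪ d) n * f (x + n) := by
    simp_rw [nu_expand hR, add_mul, Finset.sum_add_distrib]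
    congr 1
    simp_rw [Finset.sum_mul, Finset.mul_sum]
    rw [Finset.sum_comm]
    refine Finset.sum_congr rfl fun a _ => ?_
    rw [Finset.sum_comm]
    refine Finset.sum_congr rfl fun d _ => Finset.sum_congr rfl fun n _ => by ring
  have h1 : (N : ℝ)⁻¹ * ∑ n ∈ Finset.Icc 1 N, SA Z n * f (x + n) ≤
      VI Z * ((N : ℝ)⁻¹ * ∑ n ∈ Finset.Icc 1 N, f (x + n)) := by
    rw [← mul_assoc, mul_comm (VI Z), mul_assoc, Finset.mul_sum (a := VI Z)]
    refine mul_le_mul_of_nonneg_left (Finset.sum_le_sum fun n _ => ?_) (by positivity)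
    exact mul_le_mul_of_nonneg_right (SA_le Z n) (hf0 _)
  have h2 : (N : ℝ)⁻¹ * ∑ a ∈ (pA Z).powerset, ∑ d ∈ DD Z R, (eps a * kap (QQ Z R) d) *
        ∑ n ∈ Finset.Icc 1 N, cc (a ∪ d) n * f (x + n) ≤
      ∑ a ∈ (pA Z).powerset, ∑ d ∈ DD Z R, |eps a * kap (QQ Z R) d| *
      ((N : ℝ)⁻¹ * |∑ n ∈ Finset.Icc 1 N, cc (a ∪ d) n * f (x + n)|) := by
    rw [Finset.mul_sum]
    refine Finset.sum_le_sum fun a _ => ?_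
    rw [Finset.mul_sum]
    refine Finset.sum_le_sum fun d _ => ?_
    rw [mul_left_comm]
    refine (le_abs_self _).trans ?_
    rw [abs_mul (eps a * kap (QQ Z R) d), abs_mul (N : ℝ)⁻¹, abs_of_pos (inv_pos.mpr hN0)]
  have h5 := Finset.sum_filter_add_sum_filter_not (pA Z).powerset (fun a => PP a ≤ R ^ 2)
    (fun a => ∑ d ∈ DD Z R, |eps a * kap (QQ Z R) d| *
      ((N : ℝ)⁻¹ * |∑ n ∈ Finset.Icc 1 N, cc (a ∪ d) n * f (x + n)|))
  have h3 := low_part (Z := Z) hR hRN hM hf x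
  have h4 := tail_part (Z := Z) hR hN hf x
  rw [e, mul_add]
  linarith

end PM

open scoped BigOperators

namespace PM

lemma block_card (j : ℕ) : j * (pB (2^j) (2^(j+1))).card ≤ 2 * 2^j := by
  have h1 : ∏ p ∈ pB (2^j) (2^(j+1)), p ∣ (2^j + 2^j).choose (2^j) := by
    refine Finset.prod_primes_dvd _ (fun p hp => (PS_pB _ _ p hp).prime) fun p hp => ?_
    have h := Finset.mem_filter.mp hp
    have h2 := Finset.mem_Ioc.mp h.1
    exact h.2.dvd_choose_add h2.1 h2.1 (by have h3 := h2.2; rw [pow_succ] at h3; omega)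
  have h2 := Nat.le_of_dvd (Nat.choose_pos (Nat.le_add_left _ _)) h1
  have h3 := h2.trans (Nat.choose_le_two_pow _ _)
  have h4 : (2^j)^(pB (2^j) (2^(j+1))).card ≤ ∏ p ∈ pB (2^j) (2^(j+1)), p :=
    Finset.pow_card_le_prod _ _ _ fun p hp => (Finset.mem_Ioc.mp (Finset.mem_filter.mp hp).1).1.le
  have h5 := h4.trans h3
  rw [← pow_mul] at h5
  have := (Nat.pow_le_pow_iff_right (by norm_num : 1 < 2)).mp h5
  omega

lemma block_sum {j : ℕ} (hj : 1 ≤ j) : ∑ p ∈ pB (2^j) (2^(j+1)), (p:ℝ)⁻¹ ≤ 2 / j := by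
  have h1 : ∑ p ∈ pB (2^j) (2^(j+1)), (p:ℝ)⁻¹ ≤ (pB (2^j) (2^(j+1))).card * ((2:ℝ)^j)⁻¹ := by
    rw [← nsmul_eq_mul]
    refine Finset.sum_le_card_nsmul _ _ _ fun p hp => ?_
    have : 2^j < p := (Finset.mem_Ioc.mp (Finset.mem_filter.mp hp).1).1
    have : (2:ℝ)^j ≤ p := by exact_mod_cast this.le
    gcongr
  refine h1.trans ?_
  have h2 : (j:ℝ) * (pB (2^j) (2^(j+1))).card ≤ 2 * 2^j := by exact_mod_cast block_card j
  have hj' : (0:ℝ) < j := by exact_mod_cast hj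
  rw [← div_eq_mul_inv, div_le_div_iff₀ (by positivity) hj']
  linarith

lemma pA_union {a b : ℕ} (h : a ≤ b) : pA b = pA a ∪ pB a b := by
  ext p
  simp only [pA, pB, Finset.mem_union, Finset.mem_filter, Finset.mem_range, Finset.mem_Ioc]
  constructor
  · rintro ⟨h1, h2⟩
    by_cases h3 : p < a + 1
    · exact Or.inl ⟨h3, h2⟩
    · exact Or.inr ⟨⟨by omega, by omega⟩, h2⟩
  · rintro (⟨h1, h2⟩ | ⟨h1, h2⟩)
    · exact ⟨by omega, h2⟩
    · exact ⟨by omega, h2⟩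

lemma mert0 (j : ℕ) : ∑ p ∈ pA (2^(j+1)), (p:ℝ)⁻¹ ≤ 1/2 + 2 * (harmonic j : ℝ) := by
  induction j with
  | zero =>
    have : pA (2^(0+1)) = {2} := by decide
    rw [this]; simp
  | succ j ih =>
    rw [pA_union (Nat.pow_le_pow_right (by norm_num) (by omega : j+1 ≤ j+1+1)),
      Finset.sum_union (disj_AB _ _)]
    have := block_sum (j := j+1) (by omega)
    rw [harmonic_succ]
    push_cast at *
    rw [div_eq_mul_inv] at this
    linarith

lemma mert {J : ℕ} (hJ : 1 ≤ J) : ∑ p ∈ pA (2^J), (p:ℝ)⁻¹ ≤ 5/2 + 2 * Real.log J := by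
  obtain ⟨j, rfl⟩ : ∃ j, J = j + 1 := ⟨J-1, by omega⟩
  have h1 := mert0 j
  have h2 := harmonic_le_one_add_log j
  have h3 : Real.log j ≤ Real.log ((j+1:ℕ):ℝ) := by
    rcases Nat.eq_zero_or_pos j with h | h
    · simp [h]
    · apply Real.log_le_log (by exact_mod_cast h); push_cast; linarith
  linarith

lemma exp_mert (k : ℕ) {J : ℕ} (hJ : 1 ≤ J) :
    Real.exp (k * (5/2 + 2 * Real.log J)) = Real.exp (5/2 * k) * (J:ℝ)^(2*k) := by
  have : (0:ℝ) < J := by exact_mod_cast hJ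
  rw [show (k:ℝ) * (5/2 + 2 * Real.log J) = 5/2*k + ((2*k:ℕ):ℝ) * Real.log J by push_cast; ring,
    Real.exp_add, Real.exp_nat_mul, Real.exp_log this]

lemma prod_one_add_le (k : ℕ) {J : ℕ} (hJ : 1 ≤ J) :
    ∏ p ∈ pA (2^J), (1 + (k:ℝ) / p) ≤ Real.exp (5/2*k) * (J:ℝ)^(2*k) := by
  rw [← exp_mert k hJ]
  refine (Finset.prod_le_prod (fun p _ => by positivity)
    (fun p _ => by rw [add_comm]; exact Real.add_one_le_exp _ :
      ∀ p ∈ pA (2^J), (1 + (k:ℝ) / p) ≤ Real.exp ((k:ℝ)/p))).trans ?_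
  rw [← Real.exp_sum]
  apply Real.exp_le_exp.mpr
  have := mert hJ
  calc ∑ p ∈ pA (2^J), (k:ℝ)/p = k * ∑ p ∈ pA (2^J), (p:ℝ)⁻¹ := by
        rw [Finset.mul_sum]; rfl
    _ ≤ _ := by gcongr

lemma pB_prod_le (Z : ℕ) {r : ℕ} (hr : 1 ≤ r) :
    ∏ p ∈ pB Z (2^r), (1 + 16 / (p:ℝ)) ≤ Real.exp 40 * (r:ℝ)^32 := by
  have h := prod_one_add_le 16 hr
  norm_num at h
  refine le_trans ?_ h
  refine Finset.prod_le_prod_of_subset_of_one_le ?_ ?_ ?_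
  · intro p hp
    have := Finset.mem_filter.mp hp
    have h2 := Finset.mem_Ioc.mp this.1
    exact Finset.mem_filter.mpr ⟨Finset.mem_range.mpr (by omega), this.2⟩
  · intro p _; positivity
  · intro p _ _
    have : (0:ℝ) ≤ 16 / p := by positivity
    linarith

lemma VI_le {J : ℕ} (hJ : 1 ≤ J) : VI (2^J) ≤ Real.exp (7/2) * (J:ℝ)^2 := by
  have tel : ∀ n : ℕ, ∑ p ∈ Finset.Icc 2 (n+1), ((p:ℝ)⁻¹ * ((p:ℝ)-1)⁻¹) ≤ 1 - ((n:ℝ)+1)⁻¹ := by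
    intro n
    induction n with
    | zero => simp
    | succ n ih =>
      rw [Finset.sum_Icc_succ_top (by omega)]
      push_cast
      have : ((n:ℝ)+1+1)⁻¹ * ((n:ℝ)+1+1-1)⁻¹ = ((n:ℝ)+1)⁻¹ - ((n:ℝ)+1+1)⁻¹ := by
        have : (n:ℝ)+1+1-1 = n+1 := by ring
        rw [this]
        field_simp; ring
      linarith
  have h2 : ∑ p ∈ pA (2^J), ((p:ℝ)⁻¹ * ((p:ℝ)-1)⁻¹) ≤ 1 := by
    refine le_trans ?_ ((tel (2^J)).trans (by
      have : (0:ℝ) ≤ (((2^J:ℕ):ℝ)+1)⁻¹ := by positivity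
      linarith))
    refine Finset.sum_le_sum_of_subset_of_nonneg ?_ ?_
    · intro p hp
      have := Finset.mem_filter.mp hp
      have h2 := this.2.two_le
      have h3 := Finset.mem_range.mp this.1
      rw [Finset.mem_Icc]; omega
    · intro p hp _
      have := (Finset.mem_Icc.mp hp).1
      have : (2:ℝ) ≤ p := by exact_mod_cast this
      have : (0:ℝ) ≤ (p:ℝ) - 1 := by linarith
      positivity
  have h3 := mert hJ
  have h4 : VI (2^J) ≤ Real.exp (∑ p ∈ pA (2^J), ((p:ℝ)⁻¹ + (p:ℝ)⁻¹ * ((p:ℝ)-1)⁻¹)) := by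
    rw [Real.exp_sum]
    refine Finset.prod_le_prod (fun p hp => (fac_pos (PS_pA _ p hp)).le) fun p hp => ?_
    have : (2:ℝ) ≤ p := by exact_mod_cast (PS_pA _ p hp).two_le
    refine le_trans (le_of_eq ?_) (Real.add_one_le_exp _)
    have h1 : (p:ℝ) - 1 ≠ 0 := by linarith
    field_simp; ring
  refine h4.trans ?_
  rw [Finset.sum_add_distrib]
  have h5 : (0:ℝ) < J := by exact_mod_cast hJ
  have : Real.exp (7/2) * (J:ℝ)^2 = Real.exp (7/2 + 2 * Real.log J) := by
    rw [Real.exp_add, show (2:ℝ) * Real.log J = ((2:ℕ):ℝ) * Real.log J by norm_num,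
      Real.exp_nat_mul, Real.exp_log h5]
  rw [this]
  apply Real.exp_le_exp.mpr; linarith

lemma tail_le {J r : ℕ} (hJ : 1 ≤ J) :
    ∑ a ∈ (pA (2^J)).powerset with ¬ PP a ≤ (2^r)^2, (4:ℝ)^a.card / PP a
      ≤ (2:ℝ)^(-(2*r/J:ℝ)) * (Real.exp 20 * (J:ℝ)^16) := by
  have hJ' : (0:ℝ) < J := by exact_mod_cast hJ
  have h1 : ∀ a ∈ (pA (2^J)).powerset, (PP a : ℝ)^((1:ℝ)/J) ≤ 2^a.card := by
    intro a ha
    have ha := Finset.mem_powerset.mp ha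
    have h2 : (PP a : ℝ) ≤ ((2:ℝ)^J)^a.card := by
      have : PP a ≤ (2^J)^a.card := by
        refine Finset.prod_le_pow_card _ _ _ fun p hp => ?_
        have := Finset.mem_range.mp (Finset.mem_filter.mp (ha hp)).1
        omega
      exact_mod_cast this
    calc (PP a : ℝ)^((1:ℝ)/J) ≤ (((2:ℝ)^J)^a.card)^((1:ℝ)/J) := by gcongr
      _ = 2^a.card := by
        rw [← pow_mul, mul_comm, pow_mul, ← Real.rpow_natCast (_ ^ a.card) J, ← Real.rpow_mul (by positivity),
          mul_one_div_cancel hJ'.ne', Real.rpow_one]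
  have h2 : ∀ a ∈ (pA (2^J)).powerset, 1 ≤ (PP a:ℝ) := fun a ha => by
    exact_mod_cast PP_pos ((PS_pA _).mono (Finset.mem_powerset.mp ha))
  have h3 : ∑ a ∈ (pA (2^J)).powerset, (8:ℝ)^a.card / PP a ≤ Real.exp 20 * (J:ℝ)^16 := by
    have h := prod_one_add_le 8 hJ
    norm_num at h
    refine le_trans (le_of_eq ?_) h
    rw [Finset.prod_one_add]
    refine Finset.sum_congr rfl fun a _ => ?_
    rw [Finset.prod_div_distrib, Finset.prod_const, PP]; push_cast; rfl
  calc _ ≤ ∑ a ∈ (pA (2^J)).powerset with ¬ PP a ≤ (2^r)^2, (2:ℝ)^(-(2*r/J:ℝ)) * ((8:ℝ)^a.card / PP a) := by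
        refine Finset.sum_le_sum fun a ha => ?_
        have ha := Finset.mem_filter.mp ha
        have h4 : ((2:ℝ)^r)^2 ≤ PP a := by exact_mod_cast (not_le.mp ha.2).le
        have h5 : (2:ℝ)^(2*r/J:ℝ) ≤ 2^a.card := by
          refine le_trans ?_ (h1 a ha.1)
          calc (2:ℝ)^(2*r/J:ℝ) = (((2:ℝ)^r)^2)^((1:ℝ)/J) := by
                rw [← pow_mul, ← Real.rpow_natCast 2 (r*2), ← Real.rpow_mul (by norm_num)]
                congr 1; push_cast; ring
            _ ≤ _ := by gcongr
        rw [Real.rpow_neg (by norm_num), ← mul_div_assoc]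
        have h6 : (8:ℝ)^a.card = 2^a.card * 4^a.card := by rw [← mul_pow]; norm_num
        have h7 := h2 a ha.1
        gcongr
        rw [h6, inv_mul_eq_div, le_div_iff₀ (by positivity), mul_comm]
        gcongr
    _ ≤ _ := by
        rw [← Finset.mul_sum]
        gcongr
        refine le_trans (Finset.sum_le_sum_of_subset_of_nonneg (Finset.filter_subset _ _) ?_) h3
        intro a _ _; positivity

end PM

open scoped BigOperators

namespace PM

lemma sum_le_of_inj {α β : Type*} [DecidableEq β] {S : Finset α} {T : Finset β} (g : α → β)
    (F : α → ℝ) (G : β → ℝ)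
    (hm : ∀ a ∈ S, g a ∈ T) (hi : Set.InjOn g S) (hle : ∀ a ∈ S, F a ≤ G (g a))
    (hG : ∀ b ∈ T, 0 ≤ G b) : ∑ a ∈ S, F a ≤ ∑ b ∈ T, G b := by
  calc ∑ a ∈ S, F a ≤ ∑ a ∈ S, G (g a) := Finset.sum_le_sum hle
    _ = ∑ b ∈ S.image g, G b := (Finset.sum_image hi).symm
    _ ≤ _ := Finset.sum_le_sum_of_subset_of_nonneg
        (fun b hb => by
          obtain ⟨a, ha, rfl⟩ := Finset.mem_image.mp hb
          exact hm a ha) fun b hb _ => hG b hb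

lemma sum_inv_sq (R : ℕ) : ∑ b ∈ Finset.Icc 1 R, ((b:ℝ)^2)⁻¹ ≤ 2 := by
  have : ∀ n : ℕ, ∑ b ∈ Finset.Icc 1 (n+1), ((b:ℝ)^2)⁻¹ ≤ 2 - ((n:ℝ)+1)⁻¹ := by
    intro n
    induction n with
    | zero => norm_num
    | succ n ih =>
      rw [Finset.sum_Icc_succ_top (by omega)]
      push_cast
      have : (((n:ℝ)+1+1)^2)⁻¹ ≤ ((n:ℝ)+1)⁻¹ - ((n:ℝ)+1+1)⁻¹ := by
        have : ((n:ℝ)+1)⁻¹ - ((n:ℝ)+1+1)⁻¹ = (((n:ℝ)+1)*((n:ℝ)+1+1))⁻¹ := by field_simp; ring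
        rw [this]
        gcongr; nlinarith
      linarith
  rcases R with _ | n
  · simp
  · refine (this n).trans ?_
    have : (0:ℝ) ≤ ((n:ℝ)+1)⁻¹ := by positivity
    linarith

/-- squarefree products up to R -/
def TT (R : ℕ) : Finset (Finset ℕ) := (pA R).powerset.filter fun s => PP s ≤ R

lemma harm_le (R : ℕ) : ∑ m ∈ Finset.Icc 1 R, (m:ℝ)⁻¹ ≤ 2 * ∑ s ∈ TT R, (PP s : ℝ)⁻¹ := by
  have h0 : ∀ m : ℕ, ∃ a b : ℕ, b ^ 2 * a = m ∧ Squarefree a := Nat.sq_mul_squarefree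
  choose a b hab hsq using h0
  have hP : ∀ m, PP (a m).primeFactors = a m := fun m => Nat.prod_primeFactors_of_squarefree (hsq m)
  have h1 : ∑ m ∈ Finset.Icc 1 R, (m:ℝ)⁻¹ ≤
      ∑ x ∈ Finset.Icc 1 R ×ˢ TT R, (((x.1:ℝ)^2)⁻¹ * (PP x.2:ℝ)⁻¹) := by
    refine sum_le_of_inj (fun m => (b m, (a m).primeFactors)) _ _ ?_ ?_ ?_ ?_
    · intro m hm
      obtain ⟨hm1, hm2⟩ := Finset.mem_Icc.mp hm
      have h := hab m
      have hb : 1 ≤ b m := by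
        rcases Nat.eq_zero_or_pos (b m) with h' | h'
        · rw [h'] at h; simp at h; omega
        · exact h'
      have ha : 1 ≤ a m := by
        rcases Nat.eq_zero_or_pos (a m) with h' | h'
        · rw [h'] at h; simp at h; omega
        · exact h'
      have haR : a m ≤ R := by
        have : 1 * a m ≤ b m ^ 2 * a m := Nat.mul_le_mul_right _ (Nat.one_le_pow _ _ hb)
        omega
      refine Finset.mem_product.mpr ⟨Finset.mem_Icc.mpr ⟨hb, by nlinarith⟩, ?_⟩
      refine Finset.mem_filter.mpr ⟨Finset.mem_powerset.mpr fun p hp => ?_, by rw [hP]; exact haR⟩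
      have h3 := Nat.le_of_mem_primeFactors hp
      exact Finset.mem_filter.mpr ⟨Finset.mem_range.mpr (by omega), Nat.prime_of_mem_primeFactors hp⟩
    · intro m _ m' _ h
      simp only [Prod.mk.injEq] at h
      have h2 : a m = a m' := by rw [← hP m, ← hP m', h.2]
      rw [← hab m, ← hab m', h.1, h2]
    · intro m _
      simp only [hP]
      rw [← mul_inv]
      apply le_of_eq; congr 1
      exact_mod_cast (hab m).symm
    · intro x _; positivity
  rw [Finset.sum_product] at h1
  simp_rw [← Finset.mul_sum] at h1
  rw [← Finset.sum_mul] at h1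
  refine h1.trans ?_
  gcongr
  exact sum_inv_sq R

lemma VI_eq (Z : ℕ) : VI Z = ∑ a ∈ (pA Z).powerset, (phi a)⁻¹ := by
  have : VI Z = ∏ p ∈ pA Z, (1 + ((p:ℝ)-1)⁻¹) := by
    refine Finset.prod_congr rfl fun p hp => ?_
    have : (2:ℝ) ≤ p := by exact_mod_cast (PS_pA _ p hp).two_le
    have h1 : (p:ℝ) - 1 ≠ 0 := by linarith
    field_simp; ring
  rw [this, Finset.prod_one_add]
  refine Finset.sum_congr rfl fun a _ => ?_
  rw [phi, Finset.prod_inv_distrib]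

lemma phi_le_PP {s : Finset ℕ} (hs : PS s) : phi s ≤ PP s := by
  unfold phi PP
  push_cast
  refine Finset.prod_le_prod (fun p hp => ?_) fun p _ => by linarith
  have : (2:ℝ) ≤ p := by exact_mod_cast (hs p hp).two_le
  linarith

lemma log_le_VJ {Z R : ℕ} (hZR : Z ≤ R) (hR : 1 ≤ R) :
    Real.log R ≤ 2 * (VI Z * JJ (QQ Z R)) := by
  have h1 : Real.log R ≤ ∑ m ∈ Finset.Icc 1 R, (m:ℝ)⁻¹ := by
    have h := log_add_one_le_harmonic R
    rw [harmonic_eq_sum_Icc] at h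
    push_cast at h
    refine le_trans (Real.log_le_log (by exact_mod_cast hR) (by linarith)) h
  refine h1.trans ((harm_le R).trans ?_)
  gcongr
  rw [VI_eq, JJ, Finset.sum_mul_sum, ← Finset.sum_product']
  refine sum_le_of_inj (fun s => (s ∩ pA Z, s ∩ pB Z R)) _ _ ?_ ?_ ?_ ?_
  · intro s hs
    obtain ⟨hs1, hs2⟩ := Finset.mem_filter.mp hs
    have hs1 := Finset.mem_powerset.mp hs1
    refine Finset.mem_product.mpr ⟨Finset.mem_powerset.mpr Finset.inter_subset_right, mem_QQ.mpr
      ⟨Finset.inter_subset_right, ?_⟩⟩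
    exact (Nat.le_of_dvd (PP_pos ((PS_pA _).mono hs1)) (PP_dvd Finset.inter_subset_left)).trans hs2
  · intro s hs t ht h
    have hs1 := Finset.mem_powerset.mp (Finset.mem_filter.mp hs).1
    have ht1 := Finset.mem_powerset.mp (Finset.mem_filter.mp ht).1
    rw [pA_union hZR] at hs1 ht1
    simp only [Prod.mk.injEq] at h
    rw [← Finset.inter_eq_left.mpr hs1, ← Finset.inter_eq_left.mpr ht1,
      Finset.inter_union_distrib_left, Finset.inter_union_distrib_left, h.1, h.2]
  · intro s hs
    have hs1 := Finset.mem_powerset.mp (Finset.mem_filter.mp hs).1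
    have hps := (PS_pA _).mono hs1
    rw [pA_union hZR] at hs1
    have hd : Disjoint (s ∩ pA Z) (s ∩ pB Z R) :=
      (disj_AB Z R).mono Finset.inter_subset_right Finset.inter_subset_right
    dsimp only
    rw [← mul_inv, ← phi_union hd, ← Finset.inter_union_distrib_left, Finset.inter_eq_left.mpr hs1]
    have := phi_pos hps
    have := phi_le_PP hps
    gcongr
  · rintro ⟨u, v⟩ h
    obtain ⟨h1, h2⟩ := Finset.mem_product.mp h
    have h3 := phi_pos ((PS_pA _).mono (Finset.mem_powerset.mp h1))
    have h4 := phi_pos (QQ_PS _ h2)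
    dsimp only at *
    positivity

lemma theta_low : ∃ c : ℝ, 0 < c ∧ ∀ n : ℕ, 1 ≤ n →
    c * (2:ℝ)^n ≤ ∑ p ∈ pA (2^n), Real.log p := by
  have hnn : ∀ n : ℕ, 1 ≤ n → Real.log 2 ≤ ∑ p ∈ pA (2^n), Real.log p := by
    intro n hn
    have h2 : 2 ∈ pA (2^n) := Finset.mem_filter.mpr ⟨Finset.mem_range.mpr (by
      have := Nat.pow_le_pow_right (by norm_num : 0 < 2) hn
      omega), Nat.prime_two⟩
    exact_mod_cast Finset.single_le_sum (f := fun p : ℕ => Real.log p)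
      (fun p _ => Real.log_natCast_nonneg p) h2
  have hl : (0:ℝ) < Real.log 2 := Real.log_pos (by norm_num)
  have h1 : ∀ᶠ x : ℝ in Filter.atTop, (Real.log (x+1) + 2 * √x * Real.log x) / x < Real.log 2 / 2 := by
    have hlim := (isLittleO_log_rpow_atTop (by norm_num : (0:ℝ) < 1/2)).tendsto_div_nhds_zero
    have h2 := hlim.eventually_lt_const (by positivity : 0 < Real.log 2 / 8)
    filter_upwards [h2, Filter.eventually_ge_atTop (2:ℝ)] with x hx hx2
    rw [← Real.sqrt_eq_rpow, div_lt_iff₀ (by positivity)] at hx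
    rw [div_lt_iff₀ (by linarith)]
    have hs1 : 1 ≤ √x := Real.one_le_sqrt.mpr (by linarith)
    have hs2 : √x * √x = x := Real.mul_self_sqrt (by linarith)
    have hlog : Real.log (x+1) ≤ 2 * Real.log x := by
      rw [show (2:ℝ) * Real.log x = ((2:ℕ):ℝ) * Real.log x by norm_num, ← Real.log_pow]
      exact Real.log_le_log (by linarith) (by nlinarith)
    have hl0 : 0 ≤ Real.log x := Real.log_nonneg (by linarith)
    have h3 : Real.log x ≤ √x * Real.log x := le_mul_of_one_le_left hl0 hs1
    have h4 : √x * Real.log x < √x * (Real.log 2 / 8 * √x) := by gcongr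
    have h5 : √x * (Real.log 2 / 8 * √x) = Real.log 2 / 8 * x := by rw [← hs2]; ring_nf; simp [Real.sq_sqrt, Real.sqrt_nonneg]
    linarith
  obtain ⟨A, hA⟩ := Filter.eventually_atTop.mp h1
  set B := max A 1 with hB
  have hB1 : 1 ≤ B := le_max_right _ _
  refine ⟨Real.log 2 / (2 * B), by positivity, fun n hn => ?_⟩
  by_cases h : B ≤ (2:ℝ)^n
  · have h2 := hA _ ((le_max_left _ _).trans h)
    have h3 := Chebyshev.theta_ge (2^n)
    have h4 : Chebyshev.theta ((2^n : ℕ):ℝ) = ∑ p ∈ pA (2^n), Real.log p := by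
      rw [Chebyshev.theta_eq_sum_primesLE_log]
      refine Finset.sum_congr ?_ fun _ _ => rfl
      ext p; simp [pA, Nat.mem_primesLE]
    rw [h4] at h3
    push_cast at h3
    rw [div_lt_iff₀ (by positivity)] at h2
    have : Real.log 2 / (2*B) * (2:ℝ)^n ≤ Real.log 2 / 2 * 2^n := by
      gcongr; linarith
    linarith
  · refine le_trans ?_ (hnn n hn)
    push Not at h
    calc Real.log 2 / (2*B) * (2:ℝ)^n ≤ Real.log 2 / (2*B) * B := by gcongr
      _ = Real.log 2 / 2 := by field_simp
      _ ≤ _ := by linarith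

end PM

open scoped BigOperators

namespace PM

lemma tail_small : ∃ C0 : ℝ, 0 < C0 ∧ ∀ J r K : ℕ, 1 ≤ J → 1 ≤ K → K * J^2 ≤ r →
    ((2:ℝ)^(-(2*r/J:ℝ)) * (Real.exp 20 * (J:ℝ)^16)) * (Real.exp 40 * (r:ℝ)^32) ≤
      C0 * (1/2:ℝ)^(K*J) := by
  have hl : (0:ℝ) < Real.log 2 := Real.log_pos (by norm_num)
  set C : ℝ := (Nat.factorial 96 : ℝ) / (Real.log 2)^96 with hC
  have hCpos : 0 < C := by positivity
  have key : ∀ y : ℝ, 0 ≤ y → y^96 ≤ C * (2:ℝ)^y := by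
    intro y hy
    have h := Real.pow_div_factorial_le_exp (y * Real.log 2) (by positivity) 96
    rw [div_le_iff₀ (by positivity), mul_pow] at h
    rw [hC, Real.rpow_def_of_pos (by norm_num), div_mul_eq_mul_div, le_div_iff₀ (by positivity),
      mul_comm (Real.log 2) y]
    linarith
  refine ⟨Real.exp 20 * Real.exp 40 * C, by positivity, fun J r K hJ hK h => ?_⟩
  have hJ' : (1:ℝ) ≤ J := by exact_mod_cast hJ
  have hK' : (1:ℝ) ≤ K := by exact_mod_cast hK
  have hr : (K:ℝ) * J^2 ≤ r := by exact_mod_cast h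
  have hJr2 : (J:ℝ)^2 ≤ r := by nlinarith
  have hJr : (J:ℝ) ≤ r := by nlinarith
  have hs : (J:ℝ) ≤ √r := Real.le_sqrt_of_sq_le hJr2
  have hss : √(r:ℝ) * √r = r := Real.mul_self_sqrt (by positivity)
  have h1 : √(r:ℝ) ≤ r / J := by
    rw [le_div_iff₀ (by linarith)]
    nlinarith [Real.sqrt_nonneg (r:ℝ)]
  have h2 : (K:ℝ) * J ≤ r / J := by
    rw [le_div_iff₀ (by linarith)]; nlinarith
  have h3 : (2:ℝ)^(-(2*r/J:ℝ)) ≤ (2:ℝ)^(-√(r:ℝ)) * (1/2:ℝ)^(K*J) := by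
    have : (1/2:ℝ)^(K*J) = (2:ℝ)^(-((K:ℝ)*J)) := by
      rw [Real.rpow_neg (by norm_num), ← Nat.cast_mul, Real.rpow_natCast]
      simp
    rw [this, ← Real.rpow_add (by norm_num)]
    apply Real.rpow_le_rpow_of_exponent_le (by norm_num)
    have : (2*r/J:ℝ) = r/J + r/J := by ring
    linarith
  have h4 := key (√r) (Real.sqrt_nonneg _)
  have h5 : √(r:ℝ)^96 = (r:ℝ)^48 := by
    rw [show 96 = 2 * 48 by norm_num, pow_mul, Real.sq_sqrt (by positivity)]
  rw [h5] at h4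
  have h6 : (2:ℝ)^(-√(r:ℝ)) * (r:ℝ)^48 ≤ C := by
    rw [Real.rpow_neg (by norm_num), inv_mul_le_iff₀ (by positivity)]
    linarith
  calc ((2:ℝ)^(-(2*r/J:ℝ)) * (Real.exp 20 * (J:ℝ)^16)) * (Real.exp 40 * (r:ℝ)^32)
      ≤ (((2:ℝ)^(-√(r:ℝ)) * (1/2:ℝ)^(K*J)) * (Real.exp 20 * (r:ℝ)^16)) * (Real.exp 40 * (r:ℝ)^32) := by
        gcongr
    _ = Real.exp 20 * Real.exp 40 * ((2:ℝ)^(-√(r:ℝ)) * (r:ℝ)^48) * (1/2:ℝ)^(K*J) := by ring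
    _ ≤ _ := by gcongr

lemma large_pt : ∃ C1 : ℝ, 0 < C1 ∧ ∀ J K n M : ℕ, 1 ≤ J → 1 ≤ K → 100 * (K * J^2) ≤ n → 2^n ≤ M →
    ∀ f : ℤ → ℝ, (∀ x, 0 ≤ f x) → (∀ x, f x ≤ 1) → ∀ x : ℤ,
    ∑ p ∈ pA (2^n), f (x + p) * Real.log p ≤
      (2:ℝ)^n * (398 * (VI (2^J) * (((2:ℝ)^n)⁻¹ * ∑ i ∈ Finset.Icc 1 (2^n), f (x + (i:ℕ)))) +
      398 * (∑ s ∈ SU (2^J) M, (8:ℝ) ^ s.card / PP s * Yv s f (2^n) x) + C1 * (1/2:ℝ)^(K*J)) := by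
  obtain ⟨C0, hC0, ht⟩ := tail_small
  refine ⟨398 * (64 + C0) + 2, by positivity, fun J K n M hJ hK hn hM f hf0 hf1 x => ?_⟩
  set r := n / 100 with hr
  have hrK : K * J^2 ≤ r := by omega
  have hr1 : 1 ≤ r := le_trans (Nat.mul_pos hK (by positivity)) hrK
  have hn1 : 100 * r ≤ n := by omega
  have hn2 : n ≤ 199 * r := by omega
  have hKJ : K * J ≤ r := le_trans (Nat.mul_le_mul_left _ (by nlinarith)) hrK
  have hJr : J ≤ r := le_trans (by nlinarith) hKJ
  have hZR : 2^J ≤ 2^r := Nat.pow_le_pow_right (by norm_num) hJr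
  have hR1 : 1 ≤ 2^r := Nat.one_le_two_pow
  have hRn : 2^r ≤ 2^n := Nat.pow_le_pow_right (by norm_num) (by omega)
  have hR4 : (2^r)^4 ≤ 2^n := by
    rw [← pow_mul]; exact Nat.pow_le_pow_right (by norm_num) (by omega)
  have hpt := pointwise (Z := 2^J) (R := 2^r) (N := 2^n) (M := M) hR1 hR4 (hR4.trans hM) hf0 hf1 x
  have htail := (mul_le_mul (tail_le (J := J) (r := r) hJ) (pB_prod_le (2^J) hr1)
    (Finset.prod_nonneg fun p _ => by positivity) (by positivity)).trans (ht J r K hJ hK hrK)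
  have hN0 : (0:ℝ) < 2^n := by positivity
  have hh : ∀ k : ℕ, k * r + r ≤ n → ((2:ℝ)^r)^k / 2^n ≤ (1/2:ℝ)^(K*J) := by
    intro k hk
    rw [div_le_iff₀ hN0, one_div, inv_pow, inv_mul_eq_div, le_div_iff₀ (by positivity), ← pow_mul,
      ← pow_add]
    exact pow_le_pow_right₀ (by norm_num) (by rw [mul_comm r k]; omega)
  have e1 := hh 40 (by omega)
  have e2 := hh 2 (by omega)
  -- split
  rw [pA_union hRn, Finset.sum_union (disj_AB _ _)]
  have hsmall : ∑ p ∈ pA (2^r), f (x + p) * Real.log p ≤ 2^n * (2 * (1/2:ℝ)^(K*J)) := by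
    have : ∑ p ∈ pA (2^r), f (x + p) * Real.log p ≤ (pA (2^r)).card • (2:ℝ)^r := by
      refine Finset.sum_le_card_nsmul _ _ _ fun p hp => ?_
      have h1 : p ≤ 2^r := by
        have := Finset.mem_range.mp (Finset.mem_filter.mp hp).1; omega
      have h2 : (p:ℝ) ≤ 2^r := by exact_mod_cast h1
      have h3 : Real.log p ≤ p := Real.log_le_self (by positivity)
      have h4 := Real.log_natCast_nonneg p
      nlinarith [hf0 (x+p), hf1 (x+p)]
    have hc : (pA (2^r)).card ≤ 2^r + 1 := by
      refine (Finset.card_filter_le _ _).trans (by simp)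
    have hc' : ((pA (2^r)).card : ℝ) ≤ 2 * 2^r := by
      have : (pA (2^r)).card ≤ 2 * 2^r := by omega
      exact_mod_cast this
    rw [nsmul_eq_mul] at this
    rw [div_le_iff₀ hN0] at e2
    nlinarith [pow_pos (show (0:ℝ) < 2 by norm_num) r]
  have hbig : ∑ p ∈ pB (2^r) (2^n), f (x + p) * Real.log p ≤
      398 * ∑ i ∈ Finset.Icc 1 (2^n), nu (2^J) (2^r) (i:ℕ) * f (x + (i:ℕ)) := by
    rw [Finset.mul_sum]
    calc _ ≤ ∑ p ∈ pB (2^r) (2^n), 398 * (nu (2^J) (2^r) (p:ℕ) * f (x + (p:ℕ))) := by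
          refine Finset.sum_le_sum fun p hp => ?_
          have hp' := Finset.mem_filter.mp hp
          have hp2 := Finset.mem_Ioc.mp hp'.1
          rw [nu_prime hR1 hZR hp'.2 hp2.1]
          have h1 := log_le_VJ hZR hR1
          have h2 : Real.log p ≤ n * Real.log 2 := by
            rw [← Real.log_pow]
            exact Real.log_le_log (by exact_mod_cast hp'.2.pos) (by exact_mod_cast hp2.2)
          have h3 : (n:ℝ) ≤ 199 * r := by exact_mod_cast hn2
          push_cast at h1
          rw [Real.log_pow] at h1
          have hl : (0:ℝ) < Real.log 2 := Real.log_pos (by norm_num)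
          have h4 : Real.log p ≤ 398 * (VI (2^J) * JJ (QQ (2^J) (2^r))) := by nlinarith
          have := mul_le_mul_of_nonneg_left h4 (hf0 (x+p))
          linarith
      _ ≤ _ := by
          refine Finset.sum_le_sum_of_subset_of_nonneg ?_ ?_
          · intro p hp
            have hp2 := Finset.mem_Ioc.mp (Finset.mem_filter.mp hp).1
            exact Finset.mem_Icc.mpr ⟨by omega, hp2.2⟩
          · intro i _ _
            have := nu_nonneg (2^J) hR1 (i:ℤ)
            have := hf0 (x+i)
            positivity
  push_cast at hpt
  rw [inv_mul_le_iff₀ hN0] at hpt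
  have hfin : 64 * ((2:ℝ)^r)^40 / 2^n ≤ 64 * (1/2:ℝ)^(K*J) := by
    rw [mul_div_assoc]; gcongr
  nlinarith

lemma small_pt (n : ℕ) (f : ℤ → ℝ) (hf0 : ∀ x, 0 ≤ f x) (x : ℤ) :
    ∑ p ∈ pA (2^n), f (x + p) * Real.log p ≤ n * ∑ i ∈ Finset.Icc 1 (2^n), f (x + (i:ℕ)) := by
  rw [Finset.mul_sum]
  calc _ ≤ ∑ p ∈ pA (2^n), n * f (x + (p:ℕ)) := by
        refine Finset.sum_le_sum fun p hp => ?_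
        have hp' := Finset.mem_filter.mp hp
        have hp2 : p ≤ 2^n := by have := Finset.mem_range.mp hp'.1; omega
        have h2 : Real.log p ≤ n * Real.log 2 := by
          rw [← Real.log_pow]
          exact Real.log_le_log (by exact_mod_cast hp'.2.pos) (by exact_mod_cast hp2)
        have h3 : Real.log 2 ≤ 1 := by linarith [Real.log_two_lt_d9]
        have h4 : Real.log p ≤ n := h2.trans (mul_le_of_le_one_right (by positivity) h3)
        rw [mul_comm]
        have := hf0 (x+p)
        gcongr
    _ ≤ _ := by
        refine Finset.sum_le_sum_of_subset_of_nonneg ?_ ?_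
        · intro p hp
          have hp' := Finset.mem_filter.mp hp
          have := Finset.mem_range.mp hp'.1
          exact Finset.mem_Icc.mpr ⟨hp'.2.one_lt.le, by omega⟩
        · intro i _ _
          have := hf0 (x+i)
          positivity

end PM

open scoped BigOperators

namespace PM

/-- indicator -/
noncomputable def ind (F : Finset ℤ) : ℤ → ℝ := (F : Set ℤ).indicator 1

lemma ind_nonneg (F : Finset ℤ) (x : ℤ) : 0 ≤ ind F x :=
  Set.indicator_nonneg (fun _ _ => zero_le_one) x

lemma ind_le (F : Finset ℤ) (x : ℤ) : ind F x ≤ 1 :=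
  Set.indicator_le' (fun _ _ => le_rfl) (fun _ _ => zero_le_one) x

lemma ind_FS (F : Finset ℤ) : FS (ind F) :=
  F.finite_toSet.subset Set.support_indicator_subset

lemma ind_En (F : Finset ℤ) : En (ind F) = F.card := by
  unfold En
  rw [tsum_eq_sum (s := F)]
  · rw [Finset.sum_congr rfl (g := fun _ => (1:ℝ))]
    · simp
    · intro x hx
      simp [ind, hx]
  · intro x hx
    simp [ind, hx]

lemma ind_sum_le (F S : Finset ℤ) : ∑ y ∈ S, ind F y ≤ F.card := by
  calc ∑ y ∈ S, ind F y = ∑ y ∈ S, if y ∈ F then (1:ℝ) else 0 := by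
        refine Finset.sum_congr rfl fun y _ => ?_
        simp [ind, Set.indicator_apply]
    _ = ((S.filter (· ∈ F)).card : ℝ) := by rw [Finset.sum_boole]
    _ ≤ F.card := by
        exact_mod_cast Finset.card_le_card fun y hy => (Finset.mem_filter.mp hy).2

lemma weak_ind (F X : Finset ℤ) (nf : ℤ → ℕ) {t : ℝ} (ht : 0 < t)
    (hX : ∀ x ∈ X, t * (2:ℝ)^(nf x) ≤ ∑ i ∈ Finset.Icc 1 (2^(nf x)), ind F (x + (i:ℕ))) :
    (X.card : ℝ) ≤ t⁻¹ * F.card := by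
  have := (weak_max (e := 1) one_pos (fun x => 2^(nf x)) (ind F) (ind_nonneg F) t ht.le X
    (fun x hx => by simpa using hX x hx) (fun x _ => Nat.one_le_two_pow)).trans (ind_sum_le F _)
  rw [inv_mul_eq_div, le_div_iff₀ ht]
  linarith

lemma main_bound : ∃ C : ℝ, 0 < C ∧ ∀ (F : Finset ℤ) (l : ℝ), 0 < l → l < 1 →
    ∀ (X : Finset ℤ) (nf : ℤ → ℕ), (∀ x ∈ X, 1 ≤ nf x ∧
      l * (∑ p ∈ pA (2^(nf x)), Real.log p) < ∑ p ∈ pA (2^(nf x)), ind F (x + p) * Real.log p) →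
    (X.card : ℝ) ≤ C * l⁻¹ * (Real.log (Real.exp 1 / l))^2 * F.card := by
  obtain ⟨c, hc, hth⟩ := theta_low
  obtain ⟨C1, hC1, hlarge⟩ := large_pt
  obtain ⟨C2, hC2, hhigh⟩ := high_main
  obtain ⟨K, hK⟩ : ∃ K : ℕ, C1 * (1/2:ℝ)^K ≤ c / 2 := by
    obtain ⟨K, hK⟩ := exists_pow_lt_of_lt_one (show 0 < c / 2 / C1 by positivity)
      (show (1/2:ℝ) < 1 by norm_num)
    refine ⟨K, ?_⟩
    rw [lt_div_iff₀ hC1] at hK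
    linarith
  set C3 : ℝ := 100 * (K+1) / c + 1592 * Real.exp (7/2) / c + C2 * (1592/c)^2 with hC3
  refine ⟨169 * C3, by positivity, fun F l hl hl1 X nf hX => ?_⟩
  set L := Real.log (Real.exp 1 / l) with hL
  have hLeq : L = 1 - Real.log l := by
    rw [hL, Real.log_div (by positivity) hl.ne', Real.log_exp]
  have hL1 : 1 ≤ L := by
    have := Real.log_nonpos hl.le hl1.le
    linarith
  have hlog2 : (0.69:ℝ) < Real.log 2 := by linarith [Real.log_two_gt_d9]
  set J := ⌈8 * L / Real.log 2⌉₊ with hJ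
  have hJ1 : 8 * L / Real.log 2 ≤ J := Nat.le_ceil _
  have hJ2 : (J:ℝ) < 8 * L / Real.log 2 + 1 := Nat.ceil_lt_add_one (by positivity)
  have hJL : (J:ℝ) ≤ 13 * L := by
    have : 8 * L / Real.log 2 ≤ 12 * L := by
      rw [div_le_iff₀ (by linarith)]; nlinarith
    linarith
  have hJpos : 1 ≤ J := by
    have : (0:ℝ) < J := lt_of_lt_of_le (by positivity) hJ1
    exact_mod_cast this
  have hJr : (1:ℝ) ≤ J := by exact_mod_cast hJpos
  have hJ3 : 8 * L ≤ J * Real.log 2 := by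
    rwa [div_le_iff₀ (by linarith)] at hJ1
  -- 2^J large
  have hexpL : Real.exp (-L) ≤ l := by
    rw [hLeq, show -(1 - Real.log l) = -1 + Real.log l by ring, Real.exp_add, Real.exp_log hl]
    have : Real.exp (-1) ≤ 1 := Real.exp_le_one_iff.mpr (by norm_num)
    nlinarith
  have hz1 : ((2:ℝ)^J)^(-(1/8):ℝ) ≤ l := by
    refine le_trans ?_ hexpL
    rw [Real.rpow_def_of_pos (by positivity), Real.log_pow]
    apply Real.exp_le_exp.mpr
    linarith
  have hz2 : (1/2:ℝ)^J ≤ l := by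
    refine le_trans ?_ hexpL
    rw [one_div, inv_pow, ← Real.exp_log (show (0:ℝ) < ((2:ℝ)^J)⁻¹ by positivity), Real.log_inv,
      Real.log_pow]
    apply Real.exp_le_exp.mpr
    linarith
  have herr : C1 * (1/2:ℝ)^((K+1)*J) ≤ c * l / 2 := by
    have h1 : (1/2:ℝ)^((K+1)*J) ≤ (1/2:ℝ)^K * l := by
      calc (1/2:ℝ)^((K+1)*J) ≤ (1/2:ℝ)^(K+J) :=
            pow_le_pow_of_le_one (by norm_num) (by norm_num) (by nlinarith)
        _ = (1/2:ℝ)^K * (1/2:ℝ)^J := pow_add _ _ _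
        _ ≤ _ := by gcongr
    calc C1 * (1/2:ℝ)^((K+1)*J) ≤ C1 * ((1/2:ℝ)^K * l) := by gcongr
      _ = (C1 * (1/2:ℝ)^K) * l := by ring
      _ ≤ c / 2 * l := by gcongr
      _ = _ := by ring
  have hVI := VI_le hJpos
  have hVI0 : 0 < VI (2^J) := Finset.prod_pos fun p hp => fac_pos (PS_pA _ p hp)
  set M := 2^(X.sup nf) with hM
  set A : ℤ → ℝ := fun x => ∑ i ∈ Finset.Icc 1 (2^(nf x)), ind F (x + (i:ℕ)) with hA
  set H : ℤ → ℝ := fun x => ∑ s ∈ SU (2^J) M, (8:ℝ) ^ s.card / PP s * Yv s (ind F) (2^(nf x)) x with hH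
  have hlow : ∀ x ∈ X, c * l * 2^(nf x) < ∑ p ∈ pA (2^(nf x)), ind F (x + p) * Real.log p := by
    intro x hx
    obtain ⟨h1, h2⟩ := hX x hx
    have h3 := hth (nf x) h1
    have : l * (c * 2^(nf x)) ≤ l * (∑ p ∈ pA (2^(nf x)), Real.log p) := by gcongr
    linarith
  set X1 := X.filter fun x => nf x < 100 * ((K+1) * J^2) with hX1
  set X2 := X.filter fun x => c * l / (1592 * VI (2^J)) * 2^(nf x) ≤ A x with hX2
  set X3 := X.filter fun x => c * l / 1592 ≤ H x with hX3
  have hcov : X ⊆ X1 ∪ (X2 ∪ X3) := by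
    intro x hx
    simp only [Finset.mem_union, hX1, hX2, hX3, Finset.mem_filter, hx, true_and]
    by_contra hcon
    push Not at hcon
    obtain ⟨h1, h2, h3⟩ := hcon
    have h4 := hlarge J (K+1) (nf x) M hJpos (by omega) h1
      (Nat.pow_le_pow_right (by norm_num) (Finset.le_sup hx)) (ind F) (ind_nonneg F) (ind_le F) x
    have h5 := hlow x hx
    have h6 := h5.trans_le h4
    have hN0 : (0:ℝ) < 2^(nf x) := by positivity
    rw [mul_comm (c*l), mul_lt_mul_iff_right₀ hN0] at h6
    have h7 : VI (2^J) * (((2:ℝ)^(nf x))⁻¹ * A x) < c * l / 1592 := by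
      have : VI (2^J) * (((2:ℝ)^(nf x))⁻¹ * A x) <
          VI (2^J) * (((2:ℝ)^(nf x))⁻¹ * (c * l / (1592 * VI (2^J)) * 2^(nf x))) := by gcongr
      refine this.trans_le (le_of_eq ?_)
      field_simp
    simp only [hH, hA] at h3 h7
    linarith
  have hF0 : (0:ℝ) ≤ F.card := by positivity
  have b1 : (X1.card : ℝ) ≤ (100 * (K+1) / c) * (J^2 * l⁻¹ * F.card) := by
    have := weak_ind F X1 nf (t := c * l / (100 * (K+1) * J^2)) (by positivity) (by
      intro x hx
      obtain ⟨hx1, hx2⟩ := Finset.mem_filter.mp hx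
      have h1 := (hlow x hx1).le.trans (small_pt (nf x) (ind F) (ind_nonneg F) x)
      have h2 : ((nf x : ℕ):ℝ) ≤ 100 * (K+1) * J^2 := by
        have : nf x ≤ 100 * (K+1) * J^2 := by rw [mul_assoc]; exact hx2.le
        exact_mod_cast this
      have h3 : 0 ≤ ∑ i ∈ Finset.Icc 1 (2^(nf x)), ind F (x + (i:ℕ)) :=
        Finset.sum_nonneg fun i _ => ind_nonneg F _
      rw [div_mul_eq_mul_div, div_le_iff₀ (by positivity)]
      have := mul_le_mul_of_nonneg_right h2 h3
      linarith)
    refine this.trans (le_of_eq ?_)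
    field_simp
  have b2 : (X2.card : ℝ) ≤ (1592 * Real.exp (7/2) / c) * (J^2 * l⁻¹ * F.card) := by
    have := weak_ind F X2 nf (t := c * l / (1592 * VI (2^J))) (by positivity) (fun x hx =>
      (Finset.mem_filter.mp hx).2)
    refine this.trans ?_
    calc (c * l / (1592 * VI (2^J)))⁻¹ * (F.card:ℝ) = 1592 / c * VI (2^J) * (l⁻¹ * F.card) := by
          field_simp
      _ ≤ 1592 / c * (Real.exp (7/2) * (J:ℝ)^2) * (l⁻¹ * F.card) := by gcongr
      _ = _ := by ring
  have b3 : (X3.card : ℝ) ≤ (C2 * (1592/c)^2) * (J^2 * l⁻¹ * F.card) := by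
    have h1 := hhigh (ind F) (ind_FS F) X3 (fun x => 2^(nf x)) (SU (2^J) M) ((2:ℝ)^J) (by positivity)
      (fun s hs => by
        have := mem_SU.mp hs
        exact ⟨this.1, by exact_mod_cast this.2.1⟩)
    rw [ind_En] at h1
    have h2 : X3.card • (c * l / 1592)^2 ≤ ∑ x ∈ X3, (H x)^2 := by
      refine Finset.card_nsmul_le_sum _ _ _ fun x hx => ?_
      have := (Finset.mem_filter.mp hx).2
      have h0 : 0 ≤ c * l / 1592 := by positivity
      gcongr
    rw [nsmul_eq_mul] at h2
    have h3 : (X3.card:ℝ) * (c * l / 1592)^2 ≤ C2 * l * F.card := by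
      refine h2.trans (h1.trans ?_)
      gcongr
    have h4 : (X3.card:ℝ) ≤ (C2 * (1592/c)^2) * (l⁻¹ * F.card) := by
      have : (C2 * (1592/c)^2) * (l⁻¹ * F.card) = C2 * l * F.card / (c * l / 1592)^2 := by
        field_simp
      rw [this, le_div_iff₀ (by positivity)]
      exact h3
    refine h4.trans ?_
    have : (1:ℝ) ≤ (J:ℝ)^2 := one_le_pow₀ hJr
    have h5 : (l⁻¹ * F.card : ℝ) ≤ J^2 * (l⁻¹ * F.card) := le_mul_of_one_le_left (by positivity) this
    rw [mul_assoc ((J:ℝ)^2)]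
    gcongr
  have hcard : (X.card:ℝ) ≤ X1.card + (X2.card + X3.card) := by
    have h1 := Finset.card_le_card hcov
    have h2 := Finset.card_union_le X1 (X2 ∪ X3)
    have h3 := Finset.card_union_le X2 X3
    have : X.card ≤ X1.card + (X2.card + X3.card) := by omega
    exact_mod_cast this
  have hC30 : 0 < C3 := by positivity
  calc (X.card:ℝ) ≤ C3 * (J^2 * l⁻¹ * F.card) := by rw [hC3]; linarith
    _ ≤ C3 * ((13*L)^2 * l⁻¹ * F.card) := by gcongr
    _ = _ := by ring

end PM


/-- Restricted weak type inequality with logarithmic loss for the maximal function of the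
weighted averages: for a finite `F ⊆ ℤ` and `0 < λ < 1`,
`#{x : sup_{n ∈ ℕ} ℳ_{2^n}(𝟙_F)(x) > λ} ≤ C λ⁻¹ log²(e/λ) #F`. -/
theorem stmt_5 :
    ∃ C : ℝ, 0 < C ∧
      ∀ (F : Finset ℤ) (l : ℝ), 0 < l → l < 1 →
        {x : ℤ | ∃ n : ℕ, 1 ≤ n ∧
            l < weightedPrimeAvg ((F : Set ℤ).indicator 1) (2 ^ n) x}.Finite ∧
        ({x : ℤ | ∃ n : ℕ, 1 ≤ n ∧
            l < weightedPrimeAvg ((F : Set ℤ).indicator 1) (2 ^ n) x}.ncard : ℝ) ≤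
          C * l⁻¹ * (Real.log (Real.exp 1 / l)) ^ 2 * F.card := by
  obtain ⟨C, hC, hmain⟩ := PM.main_bound
  refine ⟨C, hC, fun F l hl hl1 => ?_⟩
  set S : Set ℤ := {x : ℤ | ∃ n : ℕ, 1 ≤ n ∧
    l < weightedPrimeAvg ((F : Set ℤ).indicator 1) (2 ^ n) x} with hS
  obtain ⟨c, hc, hth⟩ := PM.theta_low
  have hex : ∀ x : ℤ, ∃ n : ℕ, x ∈ S → (1 ≤ n ∧
      l * (∑ p ∈ PM.pA (2^n), Real.log p) <
        ∑ p ∈ PM.pA (2^n), PM.ind F (x + p) * Real.log p) := by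
    intro x
    by_cases hx : x ∈ S
    · obtain ⟨n, hn, hlt⟩ := hx
      refine ⟨n, fun _ => ⟨hn, ?_⟩⟩
      have hpos : 0 < ∑ p ∈ PM.pA (2^n), Real.log p := lt_of_lt_of_le (by positivity) (hth n hn)
      have hlt' : l < (∑ p ∈ PM.pA (2^n), Real.log p)⁻¹ *
        ∑ p ∈ PM.pA (2^n), PM.ind F (x + p) * Real.log p := hlt
      rw [inv_mul_eq_div, lt_div_iff₀ hpos] at hlt'
      exact hlt'
    · exact ⟨0, fun h => absurd h hx⟩
  choose nf hnf using hex
  have hX : ∀ X : Finset ℤ, (X : Set ℤ) ⊆ S →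
      (X.card : ℝ) ≤ C * l⁻¹ * (Real.log (Real.exp 1 / l)) ^ 2 * F.card :=
    fun X hXS => hmain F l hl hl1 X nf fun x hx => hnf x (hXS hx)
  have hfin : S.Finite := by
    by_contra hinf
    obtain ⟨k, hk⟩ := exists_nat_gt (C * l⁻¹ * (Real.log (Real.exp 1 / l)) ^ 2 * F.card)
    obtain ⟨X, hXS, hXc⟩ := Set.Infinite.exists_subset_card_eq hinf k
    have := hX X hXS
    rw [hXc] at this
    linarith
  refine ⟨hfin, ?_⟩
  rw [Set.ncard_eq_toFinset_card S hfin]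
  exact hX _ (by simp)
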